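/- arXiv:2302.06757 — 5 statements merged into one kernel-verified Lean document; each statement's English description precedes it below -/
import Mathlib

section
/- Let H be a real Hilbert space, let (Aₙ)ₙ be a sequence of bounded linear operators on H with ‖Aₙ‖ ≤ 1 for all n, let A be a bounded linear operator on H such that Aₙ f → A f in H for every f ∈ H (strong convergence), and let B be a compact operator on H. Then Aₙ B Aₙ* converges to A B A* in operator norm: ‖Aₙ B Aₙ* − A B A*‖ → 0 as n → ∞. -/
/-!
Write `Dₙ = Aₙ - T`, so that `Dₙ → 0` strongly with `‖Dₙ‖ ≤ 2`, and split
`Aₙ B Aₙ* - T B T* = Dₙ B Aₙ* + T B Dₙ*`.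

A bounded sequence converging strongly to `0` converges uniformly on compact sets, hence
`‖Dₙ K‖ → 0` for every compact `K` (`tendsto_norm_comp_compact`). This handles the first summand.
For the second, the C⋆-identity gives `‖B Dₙ*‖² = ‖Dₙ B* B Dₙ*‖ ≤ 2 ‖Dₙ (B* B)‖`, which tends to `0`
because `B* B` is compact. The compactness of `B*` (Schauder's theorem) is thereby not needed.
-/

open ContinuousLinearMap Filter

/-- Strong convergence to `0` of a bounded sequence becomes norm convergence after composing with
a compact operator on the right. -/
lemma tendsto_norm_comp_compact
    {H : Type*} [NormedAddCommGroup H] [InnerProductSpace ℝ H]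
    (D : ℕ → H →L[ℝ] H) (K : H →L[ℝ] H) (hD : ∀ n, ‖D n‖ ≤ 2)
    (hstrong : ∀ f : H, Tendsto (fun n => D n f) atTop (nhds 0))
    (hK : IsCompactOperator K) :
    Tendsto (fun n => ‖D n ∘L K‖) atTop (nhds 0) := by
  rw [Metric.tendsto_nhds]
  intro ε hε
  obtain ⟨S, hS, hKS⟩ :=
    IsCompactOperator.image_closedBall_subset_compact (f := (K : H →ₗ[ℝ] H)) hK 1
  -- a finite net of mesh `ε / 4` for the compact set containing the image of the unit ball
  obtain ⟨t, ht, hSt⟩ := Metric.totallyBounded_iff.1 hS.totallyBounded (ε / 4) (by positivity)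
  have hev : ∀ᶠ n in atTop, ∀ y ∈ t, ‖D n y‖ < ε / 4 := by
    rw [Filter.eventually_all_finite ht]
    intro y _
    have h := (hstrong y).norm
    rw [norm_zero] at h
    exact h.eventually_lt_const (by positivity)
  filter_upwards [hev] with n hn
  have hle : ‖D n ∘L K‖ ≤ 3 * ε / 4 := by
    refine ContinuousLinearMap.opNorm_le_of_unit_norm (by positivity) fun x hx => ?_
    have hxS : K x ∈ S := hKS ⟨x, by simp [hx], rfl⟩
    obtain ⟨y, hy, hxy⟩ := Set.mem_iUnion₂.1 (hSt hxS)
    rw [Metric.mem_ball, dist_eq_norm] at hxy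
    have h1 : ‖D n (K x - y)‖ ≤ 2 * (ε / 4) := (D n).le_of_opNorm_le_of_le (hD n) hxy.le
    have h2 : (D n ∘L K) x = D n (K x - y) + D n y := by simp
    rw [h2]
    linarith [norm_add_le (D n (K x - y)) (D n y), hn y hy]
  rw [Real.dist_eq, sub_zero, abs_of_nonneg (norm_nonneg _)]
  linarith

/-- If `(Aₙ)` are contractions converging strongly to `A` and `B` is compact, then
`Aₙ B Aₙ*` converges to `A B A*` in operator norm. -/
theorem strong_convergence_compact_sandwich
    {H : Type*} [NormedAddCommGroup H] [InnerProductSpace ℝ H] [CompleteSpace H]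
    (A : ℕ → H →L[ℝ] H) (T : H →L[ℝ] H) (B : H →L[ℝ] H)
    (hnorm : ∀ n, ‖A n‖ ≤ 1)
    (hstrong : ∀ f : H, Tendsto (fun n => A n f) atTop (nhds (T f)))
    (hB : IsCompactOperator B) :
    Tendsto
      (fun n =>
        ‖A n ∘L B ∘L ContinuousLinearMap.adjoint (A n) -
          T ∘L B ∘L ContinuousLinearMap.adjoint T‖)
      atTop (nhds 0) := by
  have hT : ‖T‖ ≤ 1 := ContinuousLinearMap.opNorm_le_bound _ zero_le_one fun f =>
    le_of_tendsto (hstrong f).norm (Eventually.of_forall fun n => (A n).le_of_opNorm_le (hnorm n) f)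
  have hD : ∀ n, ‖A n - T‖ ≤ 2 := fun n => by linarith [norm_sub_le (A n) T, hnorm n]
  have hDs : ∀ f : H, Tendsto (fun n => (A n - T) f) atTop (nhds 0) := fun f => by
    simpa using (hstrong f).sub_const (T f)
  have h1 := tendsto_norm_comp_compact (fun n => A n - T) B hD hDs hB
  have h2 := tendsto_norm_comp_compact (fun n => A n - T) (adjoint B ∘L B) hD hDs
    (hB.clm_comp (adjoint B))
  have h3 : Tendsto (fun n => ‖B ∘L adjoint (A n - T)‖) atTop (nhds 0) := by
    have h4 : Tendsto (fun n => √(‖(A n - T) ∘L (adjoint B ∘L B)‖ * 2)) atTop (nhds 0) := by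
      simpa using (h2.mul_const 2).sqrt
    refine squeeze_zero (fun _ => norm_nonneg _) (fun n => Real.le_sqrt_of_sq_le ?_) h4
    have h5 : adjoint (B ∘L adjoint (A n - T)) ∘L (B ∘L adjoint (A n - T)) =
        ((A n - T) ∘L (adjoint B ∘L B)) ∘L adjoint (A n - T) := by
      rw [adjoint_comp, adjoint_adjoint]
      rfl
    rw [sq, ← norm_adjoint_comp_self, h5]
    refine (opNorm_comp_le _ _).trans (mul_le_mul_of_nonneg_left ?_ (norm_nonneg _))
    rw [LinearIsometryEquiv.norm_map]
    exact hD n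
  have h7 := h1.add h3
  rw [add_zero] at h7
  refine squeeze_zero (fun _ => norm_nonneg _) (fun n => ?_) h7
  have h6 : A n ∘L B ∘L adjoint (A n) - T ∘L B ∘L adjoint T =
      ((A n - T) ∘L B) ∘L adjoint (A n) + T ∘L (B ∘L adjoint (A n - T)) := by
    ext x
    simp
  rw [h6]
  refine (norm_add_le _ _).trans (add_le_add ?_ ?_)
  · refine (opNorm_comp_le _ _).trans (mul_le_of_le_one_right (norm_nonneg _) ?_)
    rw [LinearIsometryEquiv.norm_map]
    exact hnorm n
  · exact (opNorm_comp_le _ _).trans (mul_le_of_le_one_left (norm_nonneg _) hT)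
end

section
/- Let H be a real Hilbert space, let D be a compact positive self-adjoint injective operator on H, and let B be a compact operator on H. Then ‖ (D + λI)^{−1/2} D^{1/2} B D^{1/2} (D + λI)^{−1/2} − B ‖ → 0 as λ → 0⁺, where the convergence is in operator norm. (Writing C = D^{1/2} B D^{1/2}, this says that the regularized operator (D+λI)^{−1/2} C (D+λI)^{−1/2} converges in operator norm to D^{−1/2} C D^{−1/2} = B as the regularization λ tends to zero.) -/
/-!
Put `T = D^{1/2} (D + λ)^{-1/2}`, so that the sandwiched operator is `T† B T`. The identity
`T† T = 1 - λ (D + λ)^{-1}` makes `T` a contraction. Since `D` is compact, self-adjoint and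
injective, its eigenvectors with positive eigenvalues span a dense subspace. On an eigenvector of
eigenvalue `μ`, both positive square roots act by scalars (`sqrt_apply_of_sq_apply`), so `T†` acts
as multiplication by `√μ / √(μ + λ)`, which tends to `1`. Uniform boundedness and density give
`T† → 1` strongly (`tendsto_of_dense`), and strong convergence becomes norm convergence after
composing with a compact operator on the right (`tendsto_norm_comp_compact`).

Finally `T† B T - B = T† B (T - 1) + (T† - 1) B`. The first term is handled without Schauder's
theorem on adjoints, through `‖B (T - 1)‖² = ‖(T† - 1) (B† B) (T - 1)‖`, where `B† B` is compact.

Commutation of `D^{1/2}` with `(D + λ)^{-1/2}` is never needed.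
-/

open ContinuousLinearMap Filter

section Helpers

variable {H : Type*} [NormedAddCommGroup H] [InnerProductSpace ℝ H]

/-- If a positive operator satisfies `P² x = c² x` with `c > 0`, then `P x = c x`: the vector
`y = P x - c x` satisfies `P y = -c y`, which positivity forbids unless `y = 0`. -/
lemma sqrt_apply_of_sq_apply {P : H →L[ℝ] H} (hP : P.IsPositive) {c : ℝ} (hc : 0 < c) {x : H}
    (hx : P (P x) = (c ^ 2) • x) : P x = c • x := by
  have hy : P (P x - c • x) = -(c • (P x - c • x)) := by
    rw [map_sub, map_smul, hx, smul_sub, smul_smul, pow_two]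
    abel
  have h0 := hP.inner_nonneg_left (P x - c • x)
  rw [hy, inner_neg_left, real_inner_smul_left, real_inner_self_eq_norm_sq] at h0
  have h1 : ‖P x - c • x‖ ^ 2 = 0 := by
    have := sq_nonneg ‖P x - c • x‖
    nlinarith
  have h2 : P x - c • x = 0 := by simpa using h1
  exact sub_eq_zero.mp h2

lemma tendsto_of_dense {ι : Type*} {l : Filter ι} {A : ι → H →L[ℝ] H} {C : ℝ} (hC : 0 < C)
    (hA : ∀ᶠ i in l, ‖A i‖ ≤ C) {V : Submodule ℝ H} (hV : V.topologicalClosure = ⊤)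
    (h : ∀ x ∈ V, Tendsto (fun i => A i x) l (nhds 0)) (x : H) :
    Tendsto (fun i => A i x) l (nhds 0) := by
  rw [Metric.tendsto_nhds]
  intro ε hε
  have hx : x ∈ closure (V : Set H) := by
    rw [← Submodule.topologicalClosure_coe, hV]; trivial
  obtain ⟨y, hyV, hy⟩ := Metric.mem_closure_iff.mp hx (ε / (2 * C)) (by positivity)
  filter_upwards [hA, Metric.tendsto_nhds.mp (h y hyV) (ε / 2) (by positivity)] with i hi hiy
  rw [dist_zero_right] at hiy ⊢
  have h1 : ‖A i (x - y)‖ ≤ C * (ε / (2 * C)) :=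
    (A i).le_of_opNorm_le_of_le hi (by rw [← dist_eq_norm]; exact hy.le)
  have h2 : C * (ε / (2 * C)) = ε / 2 := by field_simp
  calc ‖A i x‖ = ‖A i (x - y) + A i y‖ := by rw [← map_add, sub_add_cancel]
    _ ≤ ‖A i (x - y)‖ + ‖A i y‖ := norm_add_le _ _
    _ < ε := by linarith

/-- A uniformly bounded family tending to `0` strongly tends to `0` uniformly on the relatively
compact image of the unit ball under a compact operator. -/
lemma tendsto_norm_comp_compact_s6 {ι : Type*} {l : Filter ι} {A : ι → H →L[ℝ] H} {C : ℝ}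
    (hC : 0 < C) (hA : ∀ᶠ i in l, ‖A i‖ ≤ C)
    (h : ∀ x, Tendsto (fun i => A i x) l (nhds 0)) {K : H →L[ℝ] H} (hK : IsCompactOperator K) :
    Tendsto (fun i => ‖A i ∘L K‖) l (nhds 0) := by
  rw [Metric.tendsto_nhds]
  intro ε hε
  obtain ⟨S, hS, hKS⟩ := IsCompactOperator.image_closedBall_subset_compact
    (f := (K : H →ₗ[ℝ] H)) hK 1
  obtain ⟨t, htfin, ht⟩ := Metric.totallyBounded_iff.mp hS.totallyBounded (ε / (4 * C))
    (by positivity)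
  have ht' : ∀ᶠ i in l, ∀ y ∈ t, ‖A i y‖ < ε / 4 := by
    rw [htfin.eventually_all]
    intro y _
    simpa using Metric.tendsto_nhds.mp (h y) (ε / 4) (by positivity)
  filter_upwards [hA, ht'] with i hi hit
  have hb : ‖A i ∘L K‖ ≤ ε / 2 := by
    refine ContinuousLinearMap.opNorm_le_of_unit_norm (by positivity) fun x hx => ?_
    have hxS : K x ∈ S := hKS ⟨x, by simp [hx], rfl⟩
    obtain ⟨y, hy, hxy⟩ := Set.mem_iUnion₂.mp (ht hxS)
    have h1 : ‖A i (K x - y)‖ ≤ C * (ε / (4 * C)) :=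
      (A i).le_of_opNorm_le_of_le hi (by rw [← dist_eq_norm]; exact (Metric.mem_ball.mp hxy).le)
    have h2 : C * (ε / (4 * C)) = ε / 4 := by field_simp
    have h3 := hit y hy
    calc ‖(A i ∘L K) x‖ = ‖A i (K x - y) + A i y‖ := by
          rw [← map_add, sub_add_cancel, ContinuousLinearMap.comp_apply]
      _ ≤ ‖A i (K x - y)‖ + ‖A i y‖ := norm_add_le _ _
      _ ≤ ε / 2 := by linarith
  rw [dist_zero_right, norm_norm]
  linarith

/-- If `R` is positive and `R²` inverts `S² + λ`, then `S R` is a contraction, because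
`(S R)† (S R) = R S² R = 1 - λ R²`. -/
lemma norm_sqrt_comp_le_one {S R : H →L[ℝ] H} {lam : ℝ} (hlam : 0 < lam)
    (hS : S.IsPositive) (hR : R.IsPositive)
    (h1 : (R ∘L R) ∘L (S ∘L S + lam • (1 : H →L[ℝ] H)) = 1)
    (h2 : (S ∘L S + lam • (1 : H →L[ℝ] H)) ∘L (R ∘L R) = 1) : ‖S ∘L R‖ ≤ 1 := by
  -- `R` is invertible, so `R² M = 1 = M R²` upgrades to `R M R = 1` without commutation.
  have key : R * (S * S + lam • (1 : H →L[ℝ] H)) * R = 1 := by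
    have h1' : (R * R) * (S * S + lam • (1 : H →L[ℝ] H)) = 1 := h1
    have h2' : (S * S + lam • (1 : H →L[ℝ] H)) * (R * R) = 1 := h2
    generalize S * S + lam • (1 : H →L[ℝ] H) = M at h1' h2'
    calc R * M * R = R * M * R * (R * R * M) := by rw [h1', mul_one]
      _ = R * (M * (R * R)) * (R * M) := by simp only [mul_assoc]
      _ = 1 := by rw [h2', mul_one, ← mul_assoc, h1']
  refine ContinuousLinearMap.opNorm_le_bound _ zero_le_one fun x => ?_
  have hx : R (S (S (R x))) + lam • R (R x) = x := by
    have := congrArg (fun F : H →L[ℝ] H => F x) key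
    simpa using this
  have e1 : ‖S (R x)‖ ^ 2 + lam * ‖R x‖ ^ 2 = ‖x‖ ^ 2 := by
    have e := congrArg (fun y => inner ℝ y x) hx
    simp only [inner_add_left, real_inner_smul_left] at e
    rw [hR.inner_left_eq_inner_right, hS.inner_left_eq_inner_right,
      hR.inner_left_eq_inner_right] at e
    simpa only [real_inner_self_eq_norm_sq] using e
  rw [one_mul, ContinuousLinearMap.comp_apply]
  refine le_of_sq_le_sq ?_ (norm_nonneg x)
  nlinarith [sq_nonneg ‖R x‖]

lemma apply_eigenvector {D S R : H →L[ℝ] H} {lam μ : ℝ} (hlam : 0 < lam) (hμ : 0 < μ)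
    (hS : S.IsPositive) (hSS : S ∘L S = D) (hR : R.IsPositive)
    (h1 : (R ∘L R) ∘L (D + lam • (1 : H →L[ℝ] H)) = 1) {x : H} (hx : D x = μ • x) :
    R (S x) = (√μ * (√(μ + lam))⁻¹) • x := by
  have hSx : S x = √μ • x := by
    refine sqrt_apply_of_sq_apply hS (Real.sqrt_pos.mpr hμ) ?_
    rw [Real.sq_sqrt hμ.le, ← hx, ← hSS]
    rfl
  have hpos : 0 < μ + lam := by positivity
  have hRx : R x = (√(μ + lam))⁻¹ • x := by
    refine sqrt_apply_of_sq_apply hR (inv_pos.mpr (Real.sqrt_pos.mpr hpos)) ?_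
    rw [inv_pow, Real.sq_sqrt hpos.le]
    have e : R (R ((μ + lam) • x)) = x := by
      have := congrArg (fun F : H →L[ℝ] H => F x) h1
      simpa [hx, add_smul] using this
    rw [map_smul, map_smul] at e
    rw [eq_inv_smul_iff₀ hpos.ne', e]
  rw [hSx, map_smul, hRx, smul_smul]

/-- For a fixed eigenvector the scalar `√μ / √(μ + λ)` tends to `1`; the eigenvalue `0` is excluded
by injectivity and negative eigenvalues by positivity. -/
lemma tendsto_on_eigenspaces {D S : H →L[ℝ] H} {R : ℝ → H →L[ℝ] H}
    (hD : D.IsPositive) (hDinj : Function.Injective D)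
    (hS : S.IsPositive) (hSS : S ∘L S = D)
    (hR : ∀ lam : ℝ, 0 < lam → (R lam).IsPositive ∧
      (R lam ∘L R lam) ∘L (D + lam • (1 : H →L[ℝ] H)) = 1)
    {x : H} (hx : x ∈ ⨆ μ : ℝ, Module.End.eigenspace (D : H →ₗ[ℝ] H) μ) :
    Tendsto (fun lam => (R lam ∘L S - 1) x) (nhdsWithin 0 (Set.Ioi 0)) (nhds 0) := by
  refine Submodule.iSup_induction _
    (motive := fun x => Tendsto (fun lam => (R lam ∘L S - 1) x) (nhdsWithin 0 (Set.Ioi 0))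
      (nhds 0)) hx (fun μ x hx => ?_) (by simp) (fun x y hx hy => by simpa only [map_add, add_zero] using hx.add hy)
  rcases eq_or_ne x 0 with rfl | hx0
  · simp
  have hDx : D x = μ • x := Module.End.mem_eigenspace_iff.mp hx
  have hμ0 : μ ≠ 0 := by
    rintro rfl
    exact hx0 (hDinj (by rw [hDx, zero_smul, map_zero]))
  have hμ : 0 < μ := by
    have h0 := hD.inner_nonneg_left x
    rw [hDx, real_inner_smul_left, real_inner_self_eq_norm_sq] at h0
    have : 0 < ‖x‖ ^ 2 := by positivity
    exact lt_of_le_of_ne (nonneg_of_mul_nonneg_left h0 this) hμ0.symm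
  have hlim : Tendsto (fun lam : ℝ => (√μ * (√(μ + lam))⁻¹ - 1) • x)
      (nhdsWithin 0 (Set.Ioi 0)) (nhds 0) := by
    have hsq : √(μ + 0) ≠ 0 := by rw [add_zero]; positivity
    have hc : ContinuousAt (fun lam : ℝ => (√μ * (√(μ + lam))⁻¹ - 1) • x) 0 := by
      fun_prop (disch := exact hsq)
    have hv : (√μ * (√(μ + 0))⁻¹ - 1) • x = 0 := by
      rw [add_zero] at hsq ⊢
      rw [mul_inv_cancel₀ hsq, sub_self, zero_smul]
    have := hc.tendsto
    rw [hv] at this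
    exact this.mono_left nhdsWithin_le_nhds
  refine hlim.congr' ?_
  filter_upwards [self_mem_nhdsWithin] with lam hlam
  obtain ⟨hRp, h1⟩ := hR lam hlam
  simp [apply_eigenvector hlam hμ hS hSS hRp h1 hDx, sub_smul]

/-- Norm bound for `T† B T - B`, avoiding compactness of `B†`. -/
lemma norm_sandwich_sub_le [CompleteSpace H] {T B : H →L[ℝ] H} (hT : ‖T‖ ≤ 1) :
    ‖adjoint T ∘L B ∘L T - B‖ ≤
      √(2 * ‖(adjoint T - 1) ∘L (adjoint B ∘L B)‖) + ‖(adjoint T - 1) ∘L B‖ := by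
  have hT' : ‖adjoint T‖ ≤ 1 := by rwa [LinearIsometryEquiv.norm_map]
  have hone : ‖(1 : H →L[ℝ] H)‖ ≤ 1 := ContinuousLinearMap.norm_id_le
  have hdec : adjoint T ∘L B ∘L T - B
      = adjoint T ∘L (B ∘L (T - 1)) + (adjoint T - 1) ∘L B := by
    ext x; simp
  have hsq : ‖B ∘L (T - 1)‖ ^ 2 ≤ 2 * ‖(adjoint T - 1) ∘L (adjoint B ∘L B)‖ := by
    have hadj : adjoint (B ∘L (T - 1)) ∘L (B ∘L (T - 1))
        = ((adjoint T - 1) ∘L (adjoint B ∘L B)) ∘L (T - 1) := by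
      have : adjoint (1 : H →L[ℝ] H) = 1 := star_one (H →L[ℝ] H)
      rw [adjoint_comp, map_sub, this]
      rfl
    calc ‖B ∘L (T - 1)‖ ^ 2 = ‖adjoint (B ∘L (T - 1)) ∘L (B ∘L (T - 1))‖ := by
          rw [norm_adjoint_comp_self, pow_two]
      _ ≤ ‖(adjoint T - 1) ∘L (adjoint B ∘L B)‖ * ‖T - 1‖ := by
          rw [hadj]; exact opNorm_comp_le _ _
      _ ≤ ‖(adjoint T - 1) ∘L (adjoint B ∘L B)‖ * 2 := by
          gcongr
          exact (norm_sub_le _ _).trans (by linarith)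
      _ = _ := mul_comm _ _
  rw [hdec]
  refine (norm_add_le _ _).trans (add_le_add ?_ le_rfl)
  calc ‖adjoint T ∘L (B ∘L (T - 1))‖ ≤ ‖adjoint T‖ * ‖B ∘L (T - 1)‖ := opNorm_comp_le _ _
    _ ≤ 1 * ‖B ∘L (T - 1)‖ := by gcongr
    _ ≤ _ := by rw [one_mul]; exact Real.le_sqrt_of_sq_le hsq

end Helpers

/-- Let `D` be a compact positive self-adjoint injective operator and `B` a compact operator
on a real Hilbert space `H`. Let `sqrtD` be the positive square root `D^{1/2}` of `D`, and for
`λ > 0` let `R λ` be the positive operator `(D + λI)^{-1/2}` (the inverse of the positive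
square root of `D + λI`). Then `(D + λI)^{-1/2} D^{1/2} B D^{1/2} (D + λI)^{-1/2} → B` in
operator norm as `λ → 0⁺`. -/
theorem regularized_sandwich_tendsto_operator_norm
    {H : Type*} [NormedAddCommGroup H] [InnerProductSpace ℝ H] [CompleteSpace H]
    (D B sqrtD : H →L[ℝ] H) (R : ℝ → (H →L[ℝ] H))
    (hDpos : D.IsPositive) (hDcompact : IsCompactOperator D)
    (hDinj : Function.Injective D)
    (hBcompact : IsCompactOperator B)
    (hsqrtD_pos : sqrtD.IsPositive) (hsqrtD_sq : sqrtD ∘L sqrtD = D)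
    (hR : ∀ lam : ℝ, 0 < lam → (R lam).IsPositive ∧
      (R lam ∘L R lam) ∘L (D + lam • (1 : H →L[ℝ] H)) = 1 ∧
      (D + lam • (1 : H →L[ℝ] H)) ∘L (R lam ∘L R lam) = 1) :
    Tendsto (fun lam => ‖R lam ∘L sqrtD ∘L B ∘L sqrtD ∘L R lam - B‖)
      (nhdsWithin 0 (Set.Ioi 0)) (nhds 0) := by
  have hT : ∀ lam : ℝ, 0 < lam → ‖sqrtD ∘L R lam‖ ≤ 1 := fun lam hlam => by
    obtain ⟨hRp, h1, h2⟩ := hR lam hlam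
    rw [← hsqrtD_sq] at h1 h2
    exact norm_sqrt_comp_le_one hlam hsqrtD_pos hRp h1 h2
  have hadj : ∀ lam : ℝ, 0 < lam → adjoint (sqrtD ∘L R lam) = R lam ∘L sqrtD := fun lam hlam => by
    rw [adjoint_comp, hsqrtD_pos.isSelfAdjoint.adjoint_eq,
      (hR lam hlam).1.isSelfAdjoint.adjoint_eq]
  have hbound : ∀ᶠ lam in nhdsWithin (0 : ℝ) (Set.Ioi 0), ‖R lam ∘L sqrtD - 1‖ ≤ 2 := by
    filter_upwards [self_mem_nhdsWithin] with lam hlam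
    have hone : ‖(1 : H →L[ℝ] H)‖ ≤ 1 := ContinuousLinearMap.norm_id_le
    have hT' : ‖R lam ∘L sqrtD‖ ≤ 1 := by
      rw [← hadj lam hlam, LinearIsometryEquiv.norm_map]
      exact hT lam hlam
    exact (norm_sub_le _ _).trans (by linarith)
  have hdense : (⨆ μ : ℝ, Module.End.eigenspace (D : H →ₗ[ℝ] H) μ).topologicalClosure = ⊤ := by
    rw [Submodule.topologicalClosure_eq_top_iff]
    exact orthogonalComplement_iSup_eigenspaces_eq_bot hDcompact hDpos.isSymmetric
  have hstrong : ∀ x, Tendsto (fun lam => (R lam ∘L sqrtD - 1) x)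
      (nhdsWithin 0 (Set.Ioi 0)) (nhds 0) :=
    tendsto_of_dense two_pos hbound hdense fun x hx =>
      tendsto_on_eigenspaces hDpos hDinj hsqrtD_pos hsqrtD_sq
        (fun lam hlam => ⟨(hR lam hlam).1, (hR lam hlam).2.1⟩) hx
  have hlim1 := tendsto_norm_comp_compact_s6 two_pos hbound hstrong hBcompact
  have hlim2 := tendsto_norm_comp_compact_s6 two_pos hbound hstrong
    (K := adjoint B ∘L B) (hBcompact.clm_comp (adjoint B))
  have hlim : Tendsto (fun lam => √(2 * ‖(R lam ∘L sqrtD - 1) ∘L (adjoint B ∘L B)‖)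
      + ‖(R lam ∘L sqrtD - 1) ∘L B‖) (nhdsWithin 0 (Set.Ioi 0)) (nhds 0) := by
    simpa using ((hlim2.const_mul 2).sqrt).add hlim1
  refine squeeze_zero' (Eventually.of_forall fun _ => norm_nonneg _) ?_ hlim
  filter_upwards [self_mem_nhdsWithin] with lam hlam
  have := norm_sandwich_sub_le (B := B) (hT lam hlam)
  rw [hadj lam hlam] at this
  exact this
end

section
/- Let H be a real Hilbert space, let A and B be bounded self-adjoint positive linear operators on H, and let λ > 0. Set β = sup spectrum( (B + λI)^{−1/2} (B − A) (B + λI)^{−1/2} ) and assume β < 1. Then ‖ (A + λI)^{−1/2} (B + λI)^{1/2} ‖ ≤ (1 − β)^{−1/2}. -/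
open ContinuousLinearMap

/-!
Write `G = RB (B - A) RB`. Since `B - A = (B + λ) - (A + λ)`, one has
`⟪G x, x⟫ = ‖x‖² - ‖sqA (RB x)‖²`. The supremum of the spectrum of a self-adjoint operator bounds
its quadratic form (`inner_le_sSup_spectrum`), so `(1 - β) ‖x‖² ≤ ‖sqA (RB x)‖²`. Substituting
`x = sqB (RA y)` gives `(1 - β) ‖sqB (RA y)‖² ≤ ‖y‖²`, and `sqB RA` is the adjoint of `RA sqB`.
-/

/-- On a real Hilbert space, the quadratic form of a self-adjoint operator `S` is bounded by the
supremum of the spectrum. The operator `T = S + ‖S‖` has spectrum in `[0, ∞)`, so its norm, which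
equals its spectral radius, is itself a point of the spectrum of `T`. -/
theorem inner_le_sSup_spectrum {H : Type*} [NormedAddCommGroup H] [InnerProductSpace ℝ H]
    [CompleteSpace H] {S : H →L[ℝ] H} (hS : IsSelfAdjoint S) (x : H) :
    inner ℝ (S x) x ≤ sSup (spectrum ℝ S) * ‖x‖ ^ 2 := by
  rcases subsingleton_or_nontrivial H with h | h
  · simp [Subsingleton.elim x 0]
  set T : H →L[ℝ] H := algebraMap ℝ (H →L[ℝ] H) ‖S‖ + S with hTdef
  have hT : IsSelfAdjoint T := by
    refine IsSelfAdjoint.add ?_ hS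
    exact IsSelfAdjoint.algebraMap _ (IsSelfAdjoint.all _)
  have hrad : spectralRadius ℝ T = ‖T‖₊ :=
    ContinuousLinearMap.spectralRadius_eq_nnnorm T hT
  have hne : (spectrum ℝ T).Nonempty := by
    by_contra hemp
    rw [Set.not_nonempty_iff_eq_empty] at hemp
    have h0 : ‖T‖₊ = 0 := by
      have : spectralRadius ℝ T = 0 := by simp [spectralRadius, hemp]
      exact_mod_cast hrad.symm.trans this
    have hT0 : T = 0 := by simpa using h0
    rw [hT0, spectrum.zero_eq] at hemp
    simp at hemp
  obtain ⟨μ, hμ, hμn⟩ := spectrum.exists_nnnorm_eq_spectralRadius_of_nonempty hne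
  have hnorm : |μ| = ‖T‖ := by
    have : ‖μ‖₊ = ‖T‖₊ := by exact_mod_cast hμn.trans hrad
    simpa using congrArg NNReal.toReal this
  -- Here `μ ≥ 0`, because `μ - ‖S‖` lies in the spectrum of `S`, which is within `[-‖S‖, ‖S‖]`.
  have hmem : μ - ‖S‖ ∈ spectrum ℝ S := by
    have h1 := (spectrum.add_mem_add_iff (r := μ - ‖S‖) (s := ‖S‖) (a := S)).1
    rw [sub_add_cancel] at h1
    exact h1 hμ
  have hμ0 : 0 ≤ μ := by
    have h1 := spectrum.norm_le_norm_of_mem hmem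
    rw [Real.norm_eq_abs, abs_le] at h1
    linarith
  rw [abs_of_nonneg hμ0] at hnorm
  have hle : μ - ‖S‖ ≤ sSup (spectrum ℝ S) := le_csSup (spectrum.isBounded S).bddAbove hmem
  have hTx : inner ℝ (T x) x ≤ μ * ‖x‖ ^ 2 := by
    calc inner ℝ (T x) x ≤ ‖T x‖ * ‖x‖ := real_inner_le_norm _ _
      _ ≤ (‖T‖ * ‖x‖) * ‖x‖ := by gcongr; exact T.le_opNorm x
      _ = μ * ‖x‖ ^ 2 := by rw [hnorm]; ring
  have hTS : inner ℝ (T x) x = ‖S‖ * ‖x‖ ^ 2 + inner ℝ (S x) x := by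
    simp [hTdef, Algebra.algebraMap_eq_smul_one, inner_add_left, real_inner_smul_left]
  nlinarith [mul_le_mul_of_nonneg_right hle (sq_nonneg ‖x‖)]

/-- Let `A`, `B` be bounded self-adjoint positive operators on a real Hilbert space and
`λ > 0`. With `sqA = (A + λI)^{1/2}`, `RA = (A + λI)^{-1/2}`, `sqB = (B + λI)^{1/2}`,
`RB = (B + λI)^{-1/2}`, if `β = sup spectrum (RB (B - A) RB) < 1`, then
`‖(A + λI)^{-1/2} (B + λI)^{1/2}‖ ≤ (1 - β)^{-1/2}`. -/
theorem norm_regularized_comparison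
    {H : Type*} [NormedAddCommGroup H] [InnerProductSpace ℝ H] [CompleteSpace H]
    (A B : H →L[ℝ] H) (hA : A.IsPositive) (hB : B.IsPositive)
    (lam : ℝ) (hlam : 0 < lam)
    (sqA RA sqB RB : H →L[ℝ] H)
    (hsqA_pos : sqA.IsPositive) (hsqA_sq : sqA ∘L sqA = A + lam • (1 : H →L[ℝ] H))
    (hRA_pos : RA.IsPositive) (hRA₁ : RA ∘L sqA = 1) (hRA₂ : sqA ∘L RA = 1)
    (hsqB_pos : sqB.IsPositive) (hsqB_sq : sqB ∘L sqB = B + lam • (1 : H →L[ℝ] H))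
    (hRB_pos : RB.IsPositive) (hRB₁ : RB ∘L sqB = 1) (hRB₂ : sqB ∘L RB = 1)
    (beta : ℝ) (hbeta : beta = sSup (spectrum ℝ (RB ∘L (B - A) ∘L RB)))
    (hbeta_lt : beta < 1) :
    ‖RA ∘L sqB‖ ≤ (1 - beta) ^ (-(1 / 2 : ℝ)) := by
  have hG : IsSelfAdjoint (RB ∘L (B - A) ∘L RB) := by
    have h := (hB.isSelfAdjoint.sub hA.isSelfAdjoint).adjoint_conj RB
    rwa [hRB_pos.isSelfAdjoint.adjoint_eq] at h
  have hkey : ∀ x, (1 - beta) * ‖x‖ ^ 2 ≤ ‖sqA (RB x)‖ ^ 2 := by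
    intro x
    have h1 := inner_le_sSup_spectrum hG x
    rw [← hbeta] at h1
    have hBA : (B - A) (RB x) = sqB (sqB (RB x)) - sqA (sqA (RB x)) := by
      have e1 := DFunLike.congr_fun hsqA_sq (RB x)
      have e2 := DFunLike.congr_fun hsqB_sq (RB x)
      simp only [coe_comp, Function.comp_apply, add_apply] at e1 e2
      rw [e1, e2, sub_apply]
      abel
    have hx : sqB (RB x) = x := DFunLike.congr_fun hRB₂ x
    have h2 : inner ℝ ((RB ∘L (B - A) ∘L RB) x) x = ‖x‖ ^ 2 - ‖sqA (RB x)‖ ^ 2 := by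
      simp only [coe_comp, Function.comp_apply]
      rw [hRB_pos.inner_left_eq_inner_right, hBA, inner_sub_left,
        hsqB_pos.inner_left_eq_inner_right, hsqA_pos.inner_left_eq_inner_right, hx,
        real_inner_self_eq_norm_sq, real_inner_self_eq_norm_sq]
    rw [h2] at h1
    linarith
  have hpos : 0 < 1 - beta := by linarith
  have hadj : adjoint (RA ∘L sqB) = sqB ∘L RA := by
    rw [adjoint_comp, hRA_pos.isSelfAdjoint.adjoint_eq, hsqB_pos.isSelfAdjoint.adjoint_eq]
  rw [← LinearIsometryEquiv.norm_map adjoint (RA ∘L sqB), hadj]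
  refine opNorm_le_bound _ (Real.rpow_nonneg hpos.le _) fun y => ?_
  have h1 := hkey (sqB (RA y))
  have e1 : RB (sqB (RA y)) = RA y := DFunLike.congr_fun hRB₁ (RA y)
  have e2 : sqA (RA y) = y := DFunLike.congr_fun hRA₂ y
  rw [e1, e2] at h1
  rw [Real.rpow_neg hpos.le, ← Real.sqrt_eq_rpow, inv_mul_eq_div,
    le_div_iff₀ (Real.sqrt_pos.2 hpos)]
  refine (sq_le_sq₀ (by positivity) (norm_nonneg y)).1 ?_
  rw [mul_pow, Real.sq_sqrt hpos.le, mul_comm]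
  exact h1
end

section
/- Let H be a real Hilbert space, let A and B be bounded self-adjoint positive linear operators on H, and let λ > 0. If ‖ (B + λI)^{−1/2} (B − A) (B + λI)^{−1/2} ‖ ≤ 1/2, then ‖ (A + λI)^{−1/2} (B + λI)^{1/2} ‖² ≤ 2. -/
/-!
The hypothesis bounds the quadratic form of `RB (B - A) RB` by `‖v‖² / 2`. Taking `v = sqB u`, it
reads `⟪(B - A) u, u⟫ ≤ ‖sqB u‖² / 2`, and the left side equals `‖sqB u‖² - ‖sqA u‖²` because the
two multiples of the identity cancel. Hence `‖sqB u‖² ≤ 2 ‖sqA u‖²`, that is,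
`B + λI ≤ 2 (A + λI)`. Taking `u = RA w` gives `‖sqB RA‖² ≤ 2`, and `RA sqB` is the adjoint of
`sqB RA`, so it has the same norm.
-/

open ContinuousLinearMap

/-- Let `A`, `B` be bounded self-adjoint positive operators on a real Hilbert space and
`λ > 0`. With `sqA = (A + λI)^{1/2}`, `RA = (A + λI)^{-1/2}`, `sqB = (B + λI)^{1/2}`,
`RB = (B + λI)^{-1/2}`, if `‖RB (B - A) RB‖ ≤ 1/2` then
`‖(A + λI)^{-1/2} (B + λI)^{1/2}‖² ≤ 2`. -/
theorem norm_sq_regularized_comparison_le_two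
    {H : Type*} [NormedAddCommGroup H] [InnerProductSpace ℝ H] [CompleteSpace H]
    (A B : H →L[ℝ] H) (hA : A.IsPositive) (hB : B.IsPositive)
    (lam : ℝ) (hlam : 0 < lam)
    (sqA RA sqB RB : H →L[ℝ] H)
    (hsqA_pos : sqA.IsPositive) (hsqA_sq : sqA ∘L sqA = A + lam • (1 : H →L[ℝ] H))
    (hRA_pos : RA.IsPositive) (hRA₁ : RA ∘L sqA = 1) (hRA₂ : sqA ∘L RA = 1)
    (hsqB_pos : sqB.IsPositive) (hsqB_sq : sqB ∘L sqB = B + lam • (1 : H →L[ℝ] H))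
    (hRB_pos : RB.IsPositive) (hRB₁ : RB ∘L sqB = 1) (hRB₂ : sqB ∘L RB = 1)
    (hsmall : ‖RB ∘L (B - A) ∘L RB‖ ≤ 1 / 2) :
    ‖RA ∘L sqB‖ ^ 2 ≤ 2 := by
  have symm : ∀ {T : H →L[ℝ] H}, T.IsPositive → ∀ x y, inner ℝ (T x) y = inner ℝ x (T y) :=
    fun hT x y => hT.isSelfAdjoint.isSymmetric x y
  have nA : ∀ u, ‖sqA u‖ ^ 2 = inner ℝ (A u) u + lam * ‖u‖ ^ 2 := fun u => by
    have h := DFunLike.congr_fun hsqA_sq u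
    simp only [comp_apply, add_apply, smul_apply, one_apply_eq_self] at h
    rw [← real_inner_self_eq_norm_sq, ← symm hsqA_pos, h, inner_add_left, real_inner_smul_left,
      real_inner_self_eq_norm_sq]
  have nB : ∀ u, ‖sqB u‖ ^ 2 = inner ℝ (B u) u + lam * ‖u‖ ^ 2 := fun u => by
    have h := DFunLike.congr_fun hsqB_sq u
    simp only [comp_apply, add_apply, smul_apply, one_apply_eq_self] at h
    rw [← real_inner_self_eq_norm_sq, ← symm hsqB_pos, h, inner_add_left, real_inner_smul_left,
      real_inner_self_eq_norm_sq]
  have key : ∀ u, ‖sqB u‖ ^ 2 ≤ 2 * ‖sqA u‖ ^ 2 := fun u => by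
    have hu : RB (sqB u) = u := DFunLike.congr_fun hRB₁ u
    -- Substituting `v = sqB u` turns the quadratic form of `RB (B - A) RB` into that of `B - A`.
    have h₁ : inner ℝ ((RB ∘L (B - A) ∘L RB) (sqB u)) (sqB u)
        = inner ℝ (B u) u - inner ℝ (A u) u := by
      simp only [comp_apply, hu]
      rw [symm hRB_pos, hu, sub_apply, inner_sub_left]
    have h₂ := real_inner_le_norm ((RB ∘L (B - A) ∘L RB) (sqB u)) (sqB u)
    have h₃ := (RB ∘L (B - A) ∘L RB).le_of_opNorm_le hsmall (sqB u)
    have h₄ := mul_le_mul_of_nonneg_right h₃ (norm_nonneg (sqB u))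
    rw [h₁] at h₂
    linarith [nA u, nB u]
  have hadj : RA ∘L sqB = adjoint (sqB ∘L RA) := by
    rw [adjoint_comp, hRA_pos.isSelfAdjoint.adjoint_eq, hsqB_pos.isSelfAdjoint.adjoint_eq]
  have hle : ‖sqB ∘L RA‖ ≤ √2 := by
    refine opNorm_le_bound _ (Real.sqrt_nonneg 2) fun w => ?_
    have hw : sqA (RA w) = w := DFunLike.congr_fun hRA₂ w
    have h := key (RA w)
    rw [hw] at h
    refine abs_le_of_sq_le_sq' ?_ (by positivity) |>.2
    rwa [mul_pow, Real.sq_sqrt zero_le_two]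
  rw [hadj, LinearIsometryEquiv.norm_map]
  calc ‖sqB ∘L RA‖ ^ 2 ≤ √2 ^ 2 := by gcongr
    _ = 2 := Real.sq_sqrt zero_le_two
end

section
/- Let H be a separable real Hilbert space, (Ω, μ) a probability space, and ψ₁, …, ψ_d : Ω → H measurable maps. Let D = ∫_Ω ∑_{j=1}^d ψ_j(x) ⊗ ψ_j(x) dμ(x) (a positive self-adjoint operator), assume D has finite trace Tr D (sum of ⟪D e_i, e_i⟫ over a Hilbert basis), and let 0 < λ ≤ ‖D‖. Let F_λ ≥ 0 be such that ∑_{j=1}^d ‖(D + λI)^{−1/2} ψ_j(x)‖² ≤ F_λ for all x ∈ Ω. Let x₁, …, xₙ be i.i.d. samples from μ and D̂ₙ = (1/n) ∑_{i=1}^n ∑_{j=1}^d ψ_j(x_i) ⊗ ψ_j(x_i). Then for every δ ∈ (0, 1], with probability at least 1 − δ, ‖ (D + λI)^{−1/2} (D̂ₙ − D) (D + λI)^{−1/2} ‖ ≤ 4 F_λ β/(3n) + √( 2 F_λ β / n ), where β = log( 4 Tr D / (λ δ) ). -/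
/-!
Write `A(x) = R (∑ⱼ ψⱼ(x) ⊗ ψⱼ(x)) R` with `R = (D + λ)^{-1/2}`. Then `0 ≤ A(x) ≤ F_λ`, and
`E A = R D R = 1 - λ R²` satisfies `R D R ≤ 1` and `λ R D R ≤ D`, so `Tr (R D R) ≤ Tr D / λ`. The
claim is a Bernstein inequality for the i.i.d. operators `A(x₁), …, A(xₙ)` in which the ambient
dimension is replaced by the intrinsic quantity `Tr D / λ`.

* Finite compressions. For a finite set `s` of basis vectors, the compressions of `A(xₖ)` are
  random positive semidefinite matrices, still bounded by `F_λ`, with mean `C ≤ 1` of trace at most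
  `Tr D / λ`. The bound obtained below does not depend on `s`. The events that the compression to
  `s` violates the norm bound increase with `s` and, since a Hilbert basis of a separable space is
  countable, their union has the same probability bound. Outside this union the quadratic form
  of `R (D̂ₙ - D) R` is bounded on a dense subspace, hence its norm is bounded.

* Golden–Thompson. `tr e^{A+B} ≤ tr (e^A e^B)` for symmetric matrices follows from
  `tr (XY)^{2^k} ≤ tr (X^{2^k} Y^{2^k})` (`trace_mul_pow_le`) and the Lie–Trotter formula.

* Intrinsic dimension. Let `S` be the sum of the first `n` centred and rescaled matrices
  `θ (A(xₖ) - C)`. Adding an independent summand gives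
  `E tr e^{S + Z} ≤ E tr e^S + κ E tr (e^S C)`, with `κ` from Bernstein's scalar estimate and
  `E (A - C)² ≤ F_λ C`. As `C ≤ 1`, `e^S - 1 - S ≥ 0` and `E S = 0`, the last
  term is at most `κ (tr C + E tr (e^S - 1))`, so that `E tr (e^S - 1) ≤ tr C ((1 + κ)^n - 1)`
  (`integral_trace_exp_sum_le`).

* Tail. Markov's inequality with the function `e^x - 1 - x` bounds the probability of a deviation
  larger than `T` by `2 tr C (e^{nκ} - 1) / (e^{θT} - 1 - θT)`, for both signs together. The choice
  of `θ` in `bernstein_inversion` makes this at most `4 (Tr D / λ) e^{-β} = δ`. The inversion uses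
  `e^β ≥ 4`, which holds because `λ ≤ ‖D‖ ≤ Tr D`.
-/

open MeasureTheory RealInnerProductSpace

namespace RegConc

open scoped Matrix

/-! ### The Golden–Thompson inequality -/

section Trace

variable {m : Type*} [Fintype m]

lemma trace_mul_pow_comm [DecidableEq m] (A B : Matrix m m ℝ) (N : ℕ) :
    ((A * B) ^ N).trace = ((B * A) ^ N).trace := by
  cases N with
  | zero => simp
  | succ N =>
    have h : ∀ k : ℕ, (A * B) ^ (k + 1) = A * (B * A) ^ k * B := by
      intro k
      induction k with
      | zero => simp
      | succ k ih => rw [pow_succ, ih, pow_succ (B * A)]; simp only [mul_assoc]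
    rw [h, mul_assoc, Matrix.trace_mul_comm, mul_assoc, ← pow_succ]

lemma trace_mul_sq_le (A B : Matrix m m ℝ) :
    (A * B).trace ^ 2 ≤ (A * Aᵀ).trace * (Bᵀ * B).trace := by
  have h := Finset.sum_mul_sq_le_sq_mul_sq (Finset.univ : Finset (m × m))
    (fun p => A p.1 p.2) (fun p => B p.2 p.1)
  rw [Fintype.sum_prod_type, Fintype.sum_prod_type, Fintype.sum_prod_type] at h
  simp only [Matrix.trace, Matrix.diag, Matrix.mul_apply, Matrix.transpose_apply, ← sq]
  exact h

lemma trace_mul_transpose_pow_nonneg [DecidableEq m] (W : Matrix m m ℝ) (N : ℕ) :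
    0 ≤ ((W * Wᵀ) ^ N).trace := by
  have := (Matrix.posSemidef_self_mul_conjTranspose W).pow N
  simpa using this.trace_nonneg

/-- Two trace inequalities proved by a joint induction on `k`. The first is a Cauchy–Schwarz
inequality for words `(P Q)^(2^k)` with `P`, `Q` symmetric; the second is
`|tr W^(2N)| ≤ tr (W Wᵀ)^N` for `N = 2^k` and arbitrary `W`. Each case of level `k + 1` reduces to
both cases of level `k` by cyclicity of the trace. -/
lemma trace_pow_even_bounds [DecidableEq m] (k : ℕ) :
    (∀ P Q : Matrix m m ℝ, Pᵀ = P → Qᵀ = Q →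
      ((P * Q) ^ 2 ^ k).trace ^ 2 ≤ (P ^ 2 ^ (k + 1)).trace * (Q ^ 2 ^ (k + 1)).trace) ∧
    (∀ W : Matrix m m ℝ, |(W ^ 2 ^ (k + 1)).trace| ≤ ((W * Wᵀ) ^ 2 ^ k).trace) := by
  have e2 : ∀ (M : Matrix m m ℝ) (j : ℕ), M ^ 2 ^ (j + 1) = (M * M) ^ 2 ^ j := by
    intro M j
    rw [pow_succ', pow_mul, sq]
  induction k with
  | zero =>
    refine ⟨fun P Q hP hQ => ?_, fun W => ?_⟩
    · have := trace_mul_sq_le P Q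
      rw [hP, hQ] at this
      simpa [sq] using this
    · have := trace_mul_sq_le W W
      rw [Matrix.trace_mul_comm Wᵀ W, ← sq (W * Wᵀ).trace] at this
      have h0 := trace_mul_transpose_pow_nonneg W 1
      rw [pow_one] at h0
      simpa [sq] using abs_le_of_sq_le_sq this h0
  | succ k ih =>
    obtain ⟨ihA, ihB⟩ := ih
    refine ⟨fun P Q hP hQ => ?_, fun W => ?_⟩
    · have h1 := ihB (P * Q)
      have h2 : ((P * Q * (P * Q)ᵀ) ^ 2 ^ k).trace = (((P * P) * (Q * Q)) ^ 2 ^ k).trace := by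
        rw [Matrix.transpose_mul, hP, hQ,
          show P * Q * (Q * P) = P * (Q * Q * P) by simp only [mul_assoc],
          trace_mul_pow_comm P, show Q * Q * P * P = (Q * Q) * (P * P) by simp only [mul_assoc],
          trace_mul_pow_comm]
      rw [h2] at h1
      have h3 := ihA (P * P) (Q * Q) (by simp [hP]) (by simp [hQ])
      rw [← e2 P, ← e2 Q] at h3
      refine le_trans ?_ h3
      rw [← sq_abs]
      exact pow_le_pow_left₀ (abs_nonneg _) h1 2
    · have h1 := ihB (W * W)
      rw [← e2] at h1
      have h2 : ((W * W * (W * W)ᵀ) ^ 2 ^ k).trace = (((Wᵀ * W) * (W * Wᵀ)) ^ 2 ^ k).trace := by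
        rw [Matrix.transpose_mul, show W * W * (Wᵀ * Wᵀ) = W * (W * Wᵀ * Wᵀ) by
          simp only [mul_assoc], trace_mul_pow_comm W,
          show W * Wᵀ * Wᵀ * W = (W * Wᵀ) * (Wᵀ * W) by simp only [mul_assoc],
          trace_mul_pow_comm]
      rw [h2] at h1
      have h3 := ihA (Wᵀ * W) (W * Wᵀ) (by simp) (by simp)
      rw [trace_mul_pow_comm Wᵀ W, ← sq (((W * Wᵀ) ^ 2 ^ (k + 1)).trace)] at h3
      exact h1.trans ((le_abs_self _).trans
        (abs_le_of_sq_le_sq h3 (trace_mul_transpose_pow_nonneg W _)))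

/-- `tr (X Y)^N ≤ tr (X^N Y^N)` for symmetric `X`, `Y` and `N = 2^k`. The exponent is halved by
applying `|tr W^(2N)| ≤ tr (W Wᵀ)^N` to `W = X Y`, which replaces `X, Y` by `X², Y²`. -/
lemma trace_mul_pow_le [DecidableEq m] (k : ℕ) : ∀ X Y : Matrix m m ℝ, Xᵀ = X → Yᵀ = Y →
    ((X * Y) ^ 2 ^ k).trace ≤ (X ^ 2 ^ k * Y ^ 2 ^ k).trace := by
  induction k with
  | zero => intro X Y _ _; simp
  | succ k ih =>
    intro X Y hX hY
    have h1 := (trace_pow_even_bounds k).2 (X * Y)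
    have h2 : ((X * Y * (X * Y)ᵀ) ^ 2 ^ k).trace = (((X * X) * (Y * Y)) ^ 2 ^ k).trace := by
      rw [Matrix.transpose_mul, hX, hY,
        show X * Y * (Y * X) = X * (Y * Y * X) by simp only [mul_assoc],
        trace_mul_pow_comm X, show Y * Y * X * X = (Y * Y) * (X * X) by simp only [mul_assoc],
        trace_mul_pow_comm]
    rw [h2] at h1
    have h3 := ih (X * X) (Y * Y) (by simp [hX]) (by simp [hY])
    rw [pow_succ' 2 k, pow_mul, pow_mul, pow_mul, sq X, sq Y]
    rw [pow_succ' 2 k, pow_mul] at h1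
    exact (le_abs_self _).trans (h1.trans h3)

end Trace

lemma norm_exp_le {𝔸 : Type*} [NormedRing 𝔸] [NormedAlgebra ℝ 𝔸] [NormOneClass 𝔸]
    [CompleteSpace 𝔸] (A : 𝔸) : ‖NormedSpace.exp A‖ ≤ Real.exp ‖A‖ := by
  rw [Real.exp_eq_exp_ℝ, NormedSpace.exp_eq_tsum ℝ, NormedSpace.exp_eq_tsum ℝ]
  refine tsum_of_norm_bounded (NormedSpace.expSeries_summable' (𝕂 := ℝ) ‖A‖).hasSum fun n => ?_
  rw [norm_smul, smul_eq_mul, norm_inv, Real.norm_natCast]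
  gcongr
  exact norm_pow_le A n

open Filter Topology in
/-- The Lie–Trotter product formula `(e^{A/n} e^{B/n})^n → e^{A+B}`: the curves
`t ↦ e^{tA} e^{tB}` and `t ↦ e^{t(A+B)}` have the same derivative at `0`, so the factors differ by
`o(1/n)`, and the difference of their `n`-th powers is at most `e^{‖A‖+‖B‖} n` times as large. -/
lemma lie_trotter {𝔸 : Type*} [NormedRing 𝔸] [NormedAlgebra ℝ 𝔸] [NormOneClass 𝔸]
    [CompleteSpace 𝔸] (A B : 𝔸) :
    Tendsto (fun n : ℕ => (NormedSpace.exp ((n : ℝ)⁻¹ • A) * NormedSpace.exp ((n : ℝ)⁻¹ • B)) ^ n)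
      atTop (𝓝 (NormedSpace.exp (A + B))) := by
  let _ : NormedAlgebra ℚ 𝔸 := NormedAlgebra.restrictScalars ℚ ℝ 𝔸
  set c : ℝ := ‖A‖ + ‖B‖
  have hderiv : HasDerivAt (fun t : ℝ => NormedSpace.exp (t • A) * NormedSpace.exp (t • B)
      - NormedSpace.exp (t • (A + B))) 0 0 := by
    have hA := hasDerivAt_exp_smul_const (𝕂 := ℝ) A (0 : ℝ)
    have hB := hasDerivAt_exp_smul_const (𝕂 := ℝ) B (0 : ℝ)
    have hAB := hasDerivAt_exp_smul_const (𝕂 := ℝ) (A + B) (0 : ℝ)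
    have := (hA.mul hB).sub hAB
    simpa using! this
  -- a telescoping bound for the difference of two `n`-th powers
  have hpow : ∀ (X Y : 𝔸) (M : ℝ), 1 ≤ M → ‖X‖ ≤ M → ‖Y‖ ≤ M → ∀ n : ℕ,
      ‖X ^ n - Y ^ n‖ ≤ n * M ^ n * ‖X - Y‖ := by
    intro X Y M hM hX hY n
    induction n with
    | zero => simp
    | succ n ih =>
      have e : X ^ (n + 1) - Y ^ (n + 1) = X * (X ^ n - Y ^ n) + (X - Y) * Y ^ n := by
        rw [pow_succ', pow_succ']; noncomm_ring
      rw [e]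
      have hYn : ‖Y ^ n‖ ≤ M ^ (n + 1) :=
        (norm_pow_le Y n).trans ((pow_le_pow_left₀ (norm_nonneg _) hY n).trans
          (pow_le_pow_right₀ hM (Nat.le_succ n)))
      have hM0 : 0 ≤ M := by linarith
      calc _ ≤ ‖X‖ * ‖X ^ n - Y ^ n‖ + ‖X - Y‖ * ‖Y ^ n‖ :=
            (norm_add_le _ _).trans (add_le_add (norm_mul_le _ _) (norm_mul_le _ _))
        _ ≤ M * (n * M ^ n * ‖X - Y‖) + ‖X - Y‖ * M ^ (n + 1) := by gcongr
        _ = _ := by push_cast; ring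
  rw [tendsto_iff_norm_sub_tendsto_zero]
  have hlim : Tendsto (fun n : ℕ => (n : ℝ) * ‖NormedSpace.exp ((n : ℝ)⁻¹ • A)
      * NormedSpace.exp ((n : ℝ)⁻¹ • B) - NormedSpace.exp ((n : ℝ)⁻¹ • (A + B))‖)
      atTop (𝓝 0) := by
    have h := hderiv.tendsto_slope_zero
    have h' : Tendsto (fun n : ℕ => (n : ℝ)⁻¹) atTop (𝓝[≠] 0) := by
      refine tendsto_nhdsWithin_iff.2 ⟨tendsto_inv_atTop_nhds_zero_nat, ?_⟩
      filter_upwards [eventually_gt_atTop 0] with n hn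
      simp; omega
    have h2 := (h.comp h').norm
    simpa [Function.comp_def, norm_smul] using h2
  have hlim2 := hlim.const_mul (Real.exp c)
  rw [mul_zero] at hlim2
  refine squeeze_zero' (Eventually.of_forall fun n => norm_nonneg _) ?_ hlim2
  filter_upwards [eventually_gt_atTop 0] with n hn
  have hn' : (0 : ℝ) < n := by exact_mod_cast hn
  have hexp : NormedSpace.exp (A + B) = NormedSpace.exp ((n : ℝ)⁻¹ • (A + B)) ^ n := by
    rw [← NormedSpace.exp_nsmul, ← Nat.cast_smul_eq_nsmul ℝ, smul_smul, mul_inv_cancel₀ hn'.ne',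
      one_smul]
  have hX : ‖NormedSpace.exp ((n : ℝ)⁻¹ • A) * NormedSpace.exp ((n : ℝ)⁻¹ • B)‖
      ≤ Real.exp (c / n) := by
    refine (norm_mul_le _ _).trans ?_
    refine (mul_le_mul (norm_exp_le _) (norm_exp_le _)
      (norm_nonneg _) (Real.exp_pos _).le).trans ?_
    rw [← Real.exp_add]
    apply le_of_eq
    congr 1
    rw [norm_smul, norm_smul, norm_inv, Real.norm_natCast]
    simp only [c]; field_simp
  have hY : ‖NormedSpace.exp ((n : ℝ)⁻¹ • (A + B))‖ ≤ Real.exp (c / n) := by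
    refine (norm_exp_le _).trans ?_
    rw [Real.exp_le_exp, norm_smul, norm_inv, Real.norm_natCast, div_eq_inv_mul]
    gcongr
    exact norm_add_le A B
  have h := hpow _ _ _ (Real.one_le_exp (by positivity)) hX hY n
  rw [← hexp, ← Real.exp_nat_mul, mul_div_cancel₀ _ hn'.ne'] at h
  linarith [h]

open Filter Topology in
/-- The Golden–Thompson inequality for real symmetric matrices, obtained from `trace_mul_pow_le`
applied to `e^{A/N}`, `e^{B/N}` with `N = 2^k`, and the Lie–Trotter formula. -/
lemma golden_thompson {m : Type*} [Fintype m] [DecidableEq m] (A B : Matrix m m ℝ)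
    (hA : Aᵀ = A) (hB : Bᵀ = B) :
    (NormedSpace.exp (A + B)).trace ≤ (NormedSpace.exp A * NormedSpace.exp B).trace := by
  rcases isEmpty_or_nonempty m with hm | hm
  · simp [Matrix.trace]
  have hlim : Tendsto (fun k : ℕ => (NormedSpace.exp (((2 ^ k : ℕ) : ℝ)⁻¹ • A) *
      NormedSpace.exp (((2 ^ k : ℕ) : ℝ)⁻¹ • B)) ^ 2 ^ k) atTop (𝓝 (NormedSpace.exp (A + B))) := by
    open scoped Matrix.Norms.Operator in
    exact (lie_trotter A B).comp (tendsto_pow_atTop_atTop_of_one_lt (one_lt_two (α := ℕ)))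
  have htr : Continuous (fun M : Matrix m m ℝ => M.trace) := continuous_id.matrix_trace
  refine le_of_tendsto' ((htr.tendsto _).comp hlim) fun k => ?_
  have hN : ((2 ^ k : ℕ) : ℝ) ≠ 0 := by positivity
  refine (trace_mul_pow_le k _ _ ?_ ?_).trans (le_of_eq ?_)
  · rw [← Matrix.exp_transpose, Matrix.transpose_smul, hA]
  · rw [← Matrix.exp_transpose, Matrix.transpose_smul, hB]
  · rw [← Matrix.exp_nsmul, ← Matrix.exp_nsmul, ← Nat.cast_smul_eq_nsmul ℝ,
      ← Nat.cast_smul_eq_nsmul ℝ, smul_smul, smul_smul, mul_inv_cancel₀ hN, one_smul, one_smul]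

/-! ### Spectral inequalities for real symmetric matrices -/

/-- The scalar Bernstein bound: compare the exponential series with a geometric one using
`(k + 2)! ≥ 2 · 3^k`. -/
lemma exp_le_quadratic {x a : ℝ} (hx : |x| ≤ a) (ha : a < 3) :
    Real.exp x ≤ 1 + x + (2 * (1 - a / 3))⁻¹ * x ^ 2 := by
  have ha0 : 0 ≤ a := (abs_nonneg x).trans hx
  have h1 : HasSum (fun n : ℕ => x ^ (n + 2) / (n + 2).factorial)
      (Real.exp x - (1 + x)) := by
    have h := NormedSpace.expSeries_div_hasSum_exp x
    rw [← Real.exp_eq_exp_ℝ, ← hasSum_nat_add_iff' 2] at h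
    simpa [Finset.sum_range_succ] using h
  have h2 : HasSum (fun n : ℕ => x ^ 2 / 2 * (a / 3) ^ n) (x ^ 2 / 2 * (1 - a / 3)⁻¹) :=
    (hasSum_geometric_of_lt_one (by positivity) (by linarith)).mul_left _
  have h3 := hasSum_le (fun n => ?_) h1 h2
  · rw [mul_inv]; linarith
  · have hf : (2 : ℝ) * 3 ^ n ≤ (n + 2).factorial := by
      have := Nat.factorial_mul_pow_le_factorial (m := 2) (n := n)
      rw [add_comm 2 n] at this
      exact_mod_cast this
    have hxn : x ^ (n + 2) ≤ x ^ 2 * a ^ n := by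
      calc x ^ (n + 2) ≤ |x ^ (n + 2)| := le_abs_self _
        _ = |x| ^ n * x ^ 2 := by rw [abs_pow, pow_add, sq_abs]
        _ ≤ a ^ n * x ^ 2 := by gcongr
        _ = _ := mul_comm _ _
    calc x ^ (n + 2) / (n + 2).factorial ≤ x ^ 2 * a ^ n / (n + 2).factorial := by gcongr
      _ ≤ x ^ 2 * a ^ n / (2 * 3 ^ n) := by gcongr
      _ = _ := by rw [div_pow]; field_simp

section Spectral

variable {m : Type*} [Fintype m] [DecidableEq m]

lemma exists_diagonalization (A : Matrix m m ℝ) (hA : Aᵀ = A) :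
    ∃ (U : Matrix m m ℝ) (l : m → ℝ), U * Uᵀ = 1 ∧ Uᵀ * U = 1 ∧
      A = U * Matrix.diagonal l * Uᵀ := by
  have hH : A.IsHermitian := by simpa [Matrix.IsHermitian] using hA
  refine ⟨hH.eigenvectorUnitary, hH.eigenvalues, ?_, ?_, ?_⟩
  · simpa [Matrix.star_eq_conjTranspose] using Unitary.coe_mul_star_self hH.eigenvectorUnitary
  · simpa [Matrix.star_eq_conjTranspose] using Unitary.coe_star_mul_self hH.eigenvectorUnitary
  · have := hH.spectral_theorem
    rw [Unitary.conjStarAlgAut_apply] at this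
    simpa [Matrix.star_eq_conjTranspose, Function.comp_def] using this

lemma exp_diagonalization {U : Matrix m m ℝ} (l : m → ℝ) (hU : U * Uᵀ = 1) :
    NormedSpace.exp (U * Matrix.diagonal l * Uᵀ) =
      U * Matrix.diagonal (fun i => Real.exp (l i)) * Uᵀ := by
  have hinv : U⁻¹ = Uᵀ := Matrix.inv_eq_right_inv hU
  have hu : IsUnit U := IsUnit.of_mul_eq_one _ hU
  rw [← hinv, Matrix.exp_conj U _ hu, Matrix.exp_diagonal]
  congr 3
  ext i
  rw [Pi.coe_exp, Real.exp_eq_exp_ℝ]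

lemma posSemidef_conj {U : Matrix m m ℝ} {l : m → ℝ} (hl : ∀ i, 0 ≤ l i) :
    (U * Matrix.diagonal l * Uᵀ).PosSemidef := by
  have := (Matrix.PosSemidef.diagonal (d := l) hl).mul_mul_conjTranspose_same U
  simpa using this

lemma trace_mul_nonneg {P Q : Matrix m m ℝ} (hP : P.PosSemidef) (hQ : Q.PosSemidef) :
    0 ≤ (P * Q).trace := by
  obtain ⟨U, l, -, hU, rfl⟩ := exists_diagonalization P (by simpa [Matrix.IsHermitian] using hP.1)
  have hl : ∀ i, 0 ≤ l i := by
    intro i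
    have h1 := (hP.conjTranspose_mul_mul_same U).diag_nonneg (i := i)
    rw [Matrix.conjTranspose_eq_transpose_of_trivial,
      show Uᵀ * (U * Matrix.diagonal l * Uᵀ) * U = (Uᵀ * U) * Matrix.diagonal l * (Uᵀ * U) by
        simp only [mul_assoc], hU, one_mul, mul_one] at h1
    simpa using h1
  have hQ' := hQ.conjTranspose_mul_mul_same U
  rw [Matrix.conjTranspose_eq_transpose_of_trivial] at hQ'
  rw [mul_assoc, mul_assoc, Matrix.trace_mul_comm, mul_assoc]
  refine Finset.sum_nonneg fun i _ => ?_
  rw [Matrix.diag_apply, Matrix.diagonal_mul]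
  exact mul_nonneg (hl i) hQ'.diag_nonneg

/-- If `U diag(l) Uᵀ ≤ a` in the Loewner order with `U` orthogonal, then every `l i` is at most
`a`. -/
lemma eigenvalue_le {U : Matrix m m ℝ} {l : m → ℝ} {a : ℝ} (hU : Uᵀ * U = 1)
    (h : (a • (1 : Matrix m m ℝ) - U * Matrix.diagonal l * Uᵀ).PosSemidef) (i : m) : l i ≤ a := by
  have h1 := (h.conjTranspose_mul_mul_same U).diag_nonneg (i := i)
  have h2 : Uᴴ * (a • (1 : Matrix m m ℝ) - U * Matrix.diagonal l * Uᵀ) * U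
      = a • (1 : Matrix m m ℝ) - Matrix.diagonal l := by
    rw [Matrix.conjTranspose_eq_transpose_of_trivial, mul_sub, sub_mul]
    congr 1
    · simp [hU]
    · rw [show Uᵀ * (U * Matrix.diagonal l * Uᵀ) * U = (Uᵀ * U) * Matrix.diagonal l * (Uᵀ * U) by
        simp only [mul_assoc], hU, one_mul, mul_one]
  rw [h2] at h1
  simpa using h1

lemma exp_posSemidef {A : Matrix m m ℝ} (hA : Aᵀ = A) : (NormedSpace.exp A).PosSemidef := by
  obtain ⟨U, l, h1, h2, rfl⟩ := exists_diagonalization A hA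
  rw [exp_diagonalization l h1]
  exact posSemidef_conj fun i => (Real.exp_pos _).le

lemma exp_sub_posSemidef {A : Matrix m m ℝ} (hA : Aᵀ = A) :
    (NormedSpace.exp A - 1 - A).PosSemidef := by
  obtain ⟨U, l, h1, h2, rfl⟩ := exists_diagonalization A hA
  rw [exp_diagonalization l h1]
  have e : U * Matrix.diagonal (fun i => Real.exp (l i)) * Uᵀ - 1 - U * Matrix.diagonal l * Uᵀ =
      U * Matrix.diagonal (fun i => Real.exp (l i) - 1 - l i) * Uᵀ := by
    have e3 : Matrix.diagonal (fun i => Real.exp (l i) - 1 - l i) =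
        Matrix.diagonal (fun i => Real.exp (l i)) - 1 - Matrix.diagonal l := by
      rw [← Matrix.diagonal_one, Matrix.diagonal_sub, Matrix.diagonal_sub]
    rw [e3]
    simp only [mul_sub, sub_mul, mul_one, h1]
  rw [e]
  exact posSemidef_conj fun i => by linarith [Real.add_one_le_exp (l i)]

lemma quadratic_sub_exp_posSemidef {A : Matrix m m ℝ} (hA : Aᵀ = A) {a : ℝ} (ha : a < 3)
    (h1 : (a • (1 : Matrix m m ℝ) - A).PosSemidef) (h2 : (a • (1 : Matrix m m ℝ) + A).PosSemidef) :
    (1 + A + (2 * (1 - a / 3))⁻¹ • (A * A) - NormedSpace.exp A).PosSemidef := by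
  obtain ⟨U, l, hU1, hU2, rfl⟩ := exists_diagonalization A hA
  have hl1 : ∀ i, l i ≤ a := eigenvalue_le hU2 h1
  have hl2 : ∀ i, -l i ≤ a := by
    refine eigenvalue_le (l := fun i => -l i) hU2 ?_
    have : Matrix.diagonal (fun i => -l i) = -Matrix.diagonal l := by simp
    rw [this, mul_neg, neg_mul, sub_neg_eq_add]
    exact h2
  rw [exp_diagonalization l hU1]
  set g := (2 * (1 - a / 3))⁻¹
  have e1 : (1 : Matrix m m ℝ) = U * Matrix.diagonal (fun _ => (1 : ℝ)) * Uᵀ := by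
    rw [Matrix.diagonal_one, mul_one, hU1]
  have e2 : (U * Matrix.diagonal l * Uᵀ) * (U * Matrix.diagonal l * Uᵀ) =
      U * Matrix.diagonal (fun i => l i ^ 2) * Uᵀ := by
    rw [show U * Matrix.diagonal l * Uᵀ * (U * Matrix.diagonal l * Uᵀ) =
      U * Matrix.diagonal l * (Uᵀ * U) * Matrix.diagonal l * Uᵀ by simp only [mul_assoc], hU2,
      mul_one, mul_assoc U, Matrix.diagonal_mul_diagonal]
    simp only [sq]
  have e : 1 + U * Matrix.diagonal l * Uᵀ + g • (U * Matrix.diagonal l * Uᵀ *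
      (U * Matrix.diagonal l * Uᵀ)) - U * Matrix.diagonal (fun i => Real.exp (l i)) * Uᵀ
      = U * Matrix.diagonal (fun i => 1 + l i + g * l i ^ 2 - Real.exp (l i)) * Uᵀ := by
    rw [e2]
    conv_lhs => enter [1, 1, 1]; rw [e1]
    have e3 : Matrix.diagonal (fun i => 1 + l i + g * l i ^ 2 - Real.exp (l i)) =
      Matrix.diagonal (fun _ => (1 : ℝ)) + Matrix.diagonal l + g • Matrix.diagonal (fun i => l i ^ 2)
        - Matrix.diagonal (fun i => Real.exp (l i)) := by
      ext i j
      by_cases h : i = j <;> simp [h]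
    rw [e3]
    simp only [mul_add, mul_sub, add_mul, sub_mul, Matrix.mul_smul, Matrix.smul_mul]
  rw [e]
  refine posSemidef_conj fun i => ?_
  have := exp_le_quadratic (abs_le.2 ⟨by linarith [hl2 i], hl1 i⟩) ha
  linarith

lemma exp_sub_id_mono {s x : ℝ} (hs : 0 ≤ s) (hx : s ≤ x) :
    Real.exp s - 1 - s ≤ Real.exp x - 1 - x := by
  have h1 : Real.exp x = Real.exp s * Real.exp (x - s) := by rw [← Real.exp_add]; congr 1; ring
  have h2 := Real.add_one_le_exp (x - s)
  have h3 := Real.one_le_exp hs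
  nlinarith

/-- If the quadratic form of `A` exceeds `s` in absolute value somewhere on the unit sphere, then
some eigenvalue has `|l i| ≥ s`, and `x ↦ e^x - 1 - x`, being nonnegative and increasing on
`[0, ∞)`, forces `tr (e^A - 1 - A) + tr (e^{-A} - 1 + A)` to be at least `e^s - 1 - s`. -/
lemma trace_exp_ge {A : Matrix m m ℝ} (hA : Aᵀ = A) {s : ℝ} (hs : 0 ≤ s) (c : m → ℝ)
    (hc : s * (c ⬝ᵥ c) < |c ⬝ᵥ (A *ᵥ c)|) :
    Real.exp s - 1 - s ≤ ((NormedSpace.exp A).trace - Fintype.card m) +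
      ((NormedSpace.exp (-A)).trace - Fintype.card m) := by
  obtain ⟨U, l, hU1, hU2, rfl⟩ := exists_diagonalization A hA
  have hneg : -(U * Matrix.diagonal l * Uᵀ) = U * Matrix.diagonal (fun i => -l i) * Uᵀ := by
    have : Matrix.diagonal (fun i => -l i) = -Matrix.diagonal l := by simp
    rw [this, mul_neg, neg_mul]
  have htr : ∀ v : m → ℝ, (U * Matrix.diagonal v * Uᵀ).trace = ∑ i, v i := by
    intro v
    rw [Matrix.trace_mul_comm, ← mul_assoc, hU2, one_mul, Matrix.trace_diagonal]
  rw [hneg, exp_diagonalization _ hU1, exp_diagonalization _ hU1, htr, htr]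
  have hsum : (∑ i, Real.exp (l i) - Fintype.card m) + (∑ i, Real.exp (-l i) - Fintype.card m) =
      ∑ i, ((Real.exp (l i) - 1 - l i) + (Real.exp (-l i) - 1 - (-l i))) := by
    simp only [Finset.sum_add_distrib, Finset.sum_sub_distrib, Finset.sum_neg_distrib]
    simp
  rw [hsum]
  have hpos : ∀ x : ℝ, 0 ≤ Real.exp x - 1 - x := fun x => by linarith [Real.add_one_le_exp x]
  obtain ⟨i, hi⟩ : ∃ i, s ≤ |l i| := by
    by_contra! hcon
    refine absurd hc (not_lt.2 ?_)
    set w := Uᵀ *ᵥ c with hw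
    have h1 : c ⬝ᵥ ((U * Matrix.diagonal l * Uᵀ) *ᵥ c) = ∑ i, l i * w i ^ 2 := by
      rw [← Matrix.mulVec_mulVec, ← Matrix.mulVec_mulVec, Matrix.dotProduct_mulVec,
        ← Matrix.mulVec_transpose, ← hw]
      simp only [dotProduct, Matrix.mulVec_diagonal]
      exact Finset.sum_congr rfl fun i _ => by ring
    have h2 : c ⬝ᵥ c = ∑ i, w i ^ 2 := by
      have : w ⬝ᵥ w = c ⬝ᵥ c := by
        rw [hw, Matrix.mulVec_transpose, ← Matrix.dotProduct_mulVec, ← Matrix.mulVec_transpose,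
          Matrix.mulVec_mulVec, hU1, Matrix.one_mulVec]
      rw [← this]; simp [dotProduct, sq]
    rw [h1, h2, Finset.mul_sum]
    refine (Finset.abs_sum_le_sum_abs _ _).trans (Finset.sum_le_sum fun i _ => ?_)
    rw [abs_mul, abs_of_nonneg (sq_nonneg (w i))]
    gcongr
    exact (hcon i).le
  refine le_trans ?_ (Finset.single_le_sum (fun i _ => add_nonneg (hpos _) (hpos _))
    (Finset.mem_univ i))
  rcases abs_cases (l i) with ⟨h, _⟩ | ⟨h, _⟩
  · rw [h] at hi
    linarith [exp_sub_id_mono hs hi, hpos (-l i)]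
  · rw [h] at hi
    linarith [exp_sub_id_mono hs hi, hpos (l i)]

end Spectral

/-! ### The exponential trace moment of a sum of independent matrices -/

section Probability

variable {m : Type*} [Fintype m] [DecidableEq m]

omit [DecidableEq m] in
/-- A continuous function of a matrix with measurable, uniformly bounded entries is integrable
over a finite measure. -/
lemma integrable_comp {X : Type*} [MeasurableSpace X] (P : Measure X) [IsFiniteMeasure P]
    {g : Matrix m m ℝ → ℝ} (hg : Continuous g) {W : X → Matrix m m ℝ}
    (hW : ∀ i j, Measurable fun x => W x i j) (K : ℝ) (hK : ∀ x i j, |W x i j| ≤ K) :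
    Integrable (fun x => g (W x)) P := by
  have hcomp : IsCompact (Set.univ.pi fun _ : m => Set.univ.pi fun _ : m => Set.Icc (-K) K) :=
    isCompact_univ_pi fun _ => isCompact_univ_pi fun _ => isCompact_Icc
  obtain ⟨M, hM⟩ := hcomp.exists_bound_of_continuousOn (f := fun B : m → m → ℝ => g B)
    (Continuous.continuousOn hg)
  have hmeas : Measurable (fun x => (fun i j => W x i j : m → m → ℝ)) :=
    measurable_pi_iff.2 fun i => measurable_pi_iff.2 fun j => hW i j
  have hg1 : Continuous (fun B : m → m → ℝ => g (Matrix.of B)) := hg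
  have hg' : Measurable (fun B : m → m → ℝ => g (Matrix.of B)) := hg1.measurable
  refine Integrable.of_bound (hg'.comp hmeas).aestronglyMeasurable M (Filter.Eventually.of_forall ?_)
  intro x
  refine hM (W x) ?_
  intro i _ j _
  exact abs_le.1 (hK x i j)

omit [DecidableEq m] in
lemma integral_trace_mul {X : Type*} [MeasurableSpace X] (P : Measure X)
    {W : X → Matrix m m ℝ} (hW : ∀ i j, Integrable (fun x => W x i j) P) (L M : Matrix m m ℝ)
    (hM : ∀ i j, ∫ x, W x i j ∂P = M i j) :
    ∫ x, (L * W x).trace ∂P = (L * M).trace := by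
  simp only [Matrix.trace, Matrix.diag, Matrix.mul_apply]
  rw [integral_finsetSum _ fun i _ => integrable_finsetSum _ fun j _ => (hW j i).const_mul (L i j)]
  refine Finset.sum_congr rfl fun i _ => ?_
  rw [integral_finsetSum _ fun j _ => (hW j i).const_mul (L i j)]
  refine Finset.sum_congr rfl fun j _ => ?_
  rw [integral_const_mul, hM]

lemma continuous_exp_matrix : Continuous fun A : Matrix m m ℝ => NormedSpace.exp A := by
  open scoped Matrix.Norms.Operator in
  exact NormedSpace.exp_continuous

lemma continuous_trace_exp : Continuous fun A : Matrix m m ℝ => (NormedSpace.exp A).trace :=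
  continuous_exp_matrix.matrix_trace

omit [Fintype m] [DecidableEq m] in
lemma abs_sum_apply_le {Ω : Type*} {Z : Ω → Matrix m m ℝ} {K : ℝ}
    (hK : ∀ ω i j, |Z ω i j| ≤ K) {n : ℕ} (x : Fin n → Ω) (i j : m) :
    |(∑ k, Z (x k)) i j| ≤ n * K := by
  rw [Matrix.sum_apply]
  refine (Finset.abs_sum_le_sum_abs _ _).trans ?_
  refine (Finset.sum_le_sum fun k _ => hK (x k) i j).trans ?_
  simp

omit [Fintype m] [DecidableEq m] in
lemma measurable_sum_apply {Ω : Type*} [MeasurableSpace Ω] {Z : Ω → Matrix m m ℝ}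
    (hZ : ∀ i j, Measurable fun ω => Z ω i j) (n : ℕ) (i j : m) :
    Measurable fun x : Fin n → Ω => (∑ k, Z (x k)) i j := by
  simp only [Matrix.sum_apply]
  exact Finset.measurable_fun_sum _ fun k _ => (hZ i j).comp (measurable_pi_apply k)

omit [Fintype m] [DecidableEq m] in
lemma integral_sum_apply {Ω : Type*} [MeasurableSpace Ω] (μ : Measure Ω) [IsProbabilityMeasure μ]
    {Z : Ω → Matrix m m ℝ} (hZ : ∀ i j, Measurable fun ω => Z ω i j)
    (hZi : ∀ i j, Integrable (fun ω => Z ω i j) μ)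
    (h0 : ∀ i j, ∫ ω, Z ω i j ∂μ = 0) (n : ℕ) (i j : m) :
    ∫ x : Fin n → Ω, (∑ k, Z (x k)) i j ∂(Measure.pi fun _ => μ) = 0 := by
  simp only [Matrix.sum_apply]
  rw [integral_finsetSum]
  · refine Finset.sum_eq_zero fun k _ => ?_
    rw [integral_comp_eval (μ := fun _ : Fin n => μ) (i := k) (f := fun ω => Z ω i j)
      (hZ i j).aestronglyMeasurable, h0]
  · intro k _
    exact integrable_comp_eval (μ := fun _ : Fin n => μ) (i := k) (f := fun ω => Z ω i j) (hZi i j)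

/-- The intrinsic-dimension recursion. For independent centred symmetric `Z k`, Golden–Thompson and
the one-step hypothesis `hstep` give
`E tr e^{S_{n+1}} ≤ E tr e^{S_n} + κ E tr (C e^{S_n})`. Since `0 ≤ e^S - 1 - S` and `C ≤ 1`,
`tr (C (e^S - 1 - S)) ≤ tr (e^S - 1 - S)`, and `E S_n = 0`; hence
`E tr (C e^{S_n}) ≤ tr C + (E tr e^{S_n} - m)`. This yields a bound proportional to `tr C` rather
than to the dimension `m`. -/
lemma integral_trace_exp_sum_le {Ω : Type*} [MeasurableSpace Ω] (μ : Measure Ω)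
    [IsProbabilityMeasure μ] {Z : Ω → Matrix m m ℝ} (hsymm : ∀ ω, (Z ω)ᵀ = Z ω)
    (hZ : ∀ i j, Measurable fun ω => Z ω i j) {K : ℝ} (hK : ∀ ω i j, |Z ω i j| ≤ K)
    (h0 : ∀ i j, ∫ ω, Z ω i j ∂μ = 0) {C : Matrix m m ℝ}
    (hC : ((1 : Matrix m m ℝ) - C).PosSemidef) {τ κ : ℝ} (hτ : C.trace ≤ τ) (hκ : 0 ≤ κ)
    (hstep : ∀ A : Matrix m m ℝ, Aᵀ = A →
      ∫ ω, (NormedSpace.exp A * NormedSpace.exp (Z ω)).trace ∂μ ≤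
        (NormedSpace.exp A).trace + κ * (NormedSpace.exp A * C).trace) (n : ℕ) :
    ∫ x : Fin n → Ω, (NormedSpace.exp (∑ k, Z (x k))).trace ∂(Measure.pi fun _ => μ)
      - Fintype.card m ≤ τ * ((1 + κ) ^ n - 1) := by
  have hZi : ∀ i j, Integrable (fun ω => Z ω i j) μ := fun i j =>
    integrable_comp μ (g := fun B => B i j) (by fun_prop) hZ K hK
  induction n with
  | zero => simp
  | succ n ih =>
    set P := (Measure.pi fun _ : Fin n => μ) with hP
    set S : (Fin n → Ω) → Matrix m m ℝ := fun x => ∑ k, Z (x k) with hS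
    have hSsymm : ∀ x, (S x)ᵀ = S x := fun x => by
      simp only [hS, Matrix.transpose_sum, hsymm]
    have hSi : ∀ i j, Integrable (fun x => S x i j) P := fun i j =>
      integrable_comp P (g := fun B => B i j) (by fun_prop) (measurable_sum_apply hZ n) (n * K)
        (abs_sum_apply_le hK)
    have hS0 : ∀ i j, ∫ x, S x i j ∂P = (0 : Matrix m m ℝ) i j := fun i j =>
      integral_sum_apply μ hZ hZi h0 n i j
    have hexpS : Integrable (fun x => (NormedSpace.exp (S x)).trace) P :=
      integrable_comp P continuous_trace_exp (measurable_sum_apply hZ n) (n * K)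
        (abs_sum_apply_le hK)
    have hcont : ∀ L : Matrix m m ℝ, Continuous fun B : Matrix m m ℝ => (L * B).trace := fun L =>
      (continuous_const.matrix_mul continuous_id).matrix_trace
    have hlinS : ∀ L : Matrix m m ℝ, Integrable (fun x => (L * S x).trace) P := fun L =>
      integrable_comp P (hcont L) (measurable_sum_apply hZ n) (n * K) (abs_sum_apply_le hK)
    have hlin0 : ∀ L : Matrix m m ℝ, ∫ x, (L * S x).trace ∂P = 0 := fun L => by
      rw [integral_trace_mul P hSi L 0 hS0]; simp
    have hfub : ∫ x : Fin (n + 1) → Ω, (NormedSpace.exp (∑ k, Z (x k))).trace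
        ∂(Measure.pi fun _ => μ) = ∫ x, ∫ ω, (NormedSpace.exp (S x + Z ω)).trace ∂μ ∂P := by
      have hmp := (measurePreserving_piFinSuccAbove (fun _ : Fin (n + 1) => μ) 0).symm
      rw [← hmp.integral_comp']
      have e : ∀ p : Ω × (Fin n → Ω), (NormedSpace.exp (∑ k, Z
          ((MeasurableEquiv.piFinSuccAbove (fun _ : Fin (n + 1) => Ω) 0).symm p k))).trace =
          (NormedSpace.exp (S p.2 + Z p.1)).trace := by
        intro p
        rw [Fin.sum_univ_succ, add_comm]
        rfl
      simp only [e]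
      rw [integral_prod_symm]
      refine integrable_comp _ (W := fun p : Ω × (Fin n → Ω) => S p.2 + Z p.1)
        continuous_trace_exp (fun i j => ?_) (n * K + K) (fun p i j => ?_)
      · exact ((measurable_sum_apply hZ n i j).comp measurable_snd).add
          ((hZ i j).comp measurable_fst)
      · exact (abs_add_le _ _).trans (add_le_add (abs_sum_apply_le hK _ i j) (hK _ i j))
    have hinner : ∀ x, ∫ ω, (NormedSpace.exp (S x + Z ω)).trace ∂μ ≤
        (NormedSpace.exp (S x)).trace + κ * (τ + (C * S x).trace +
          ((NormedSpace.exp (S x)).trace - Fintype.card m) - (1 * S x).trace) := by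
      intro x
      have h1 : ∫ ω, (NormedSpace.exp (S x + Z ω)).trace ∂μ ≤
          ∫ ω, (NormedSpace.exp (S x) * NormedSpace.exp (Z ω)).trace ∂μ := by
        refine integral_mono ?_ ?_ fun ω => golden_thompson _ _ (hSsymm x) (hsymm ω)
        · exact integrable_comp μ (g := fun B => (NormedSpace.exp (S x + B)).trace)
            (continuous_trace_exp.comp (continuous_const.add continuous_id)) hZ K hK
        · exact integrable_comp μ (g := fun B => (NormedSpace.exp (S x) * NormedSpace.exp B).trace)
            ((hcont _).comp continuous_exp_matrix) hZ K hK
      refine h1.trans ((hstep _ (hSsymm x)).trans ?_)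
      have h2 := trace_mul_nonneg (exp_sub_posSemidef (hSsymm x)) hC
      have h3 : ((NormedSpace.exp (S x) - 1 - S x) * (1 - C)).trace =
          (NormedSpace.exp (S x)).trace - Fintype.card m - (1 * S x).trace
          - (NormedSpace.exp (S x) * C).trace + C.trace + (C * S x).trace := by
        rw [Matrix.trace_mul_comm C]
        simp only [mul_sub, sub_mul, mul_one, one_mul, Matrix.trace_sub, Matrix.trace_one]
        ring
      rw [h3] at h2
      gcongr
      linarith
    rw [hfub]
    have i1 : Integrable (fun x => τ + (C * S x).trace) P := (integrable_const τ).add (hlinS C)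
    have i2 : Integrable (fun x => (NormedSpace.exp (S x)).trace - (Fintype.card m : ℝ)) P :=
      hexpS.sub (integrable_const _)
    have i3 : Integrable (fun x => τ + (C * S x).trace +
        ((NormedSpace.exp (S x)).trace - (Fintype.card m : ℝ))) P := i1.add i2
    have i4 : Integrable (fun x => τ + (C * S x).trace +
        ((NormedSpace.exp (S x)).trace - (Fintype.card m : ℝ)) - (1 * S x).trace) P :=
      i3.sub (hlinS 1)
    have hmono := integral_mono_of_nonneg (μ := P)
      (f := fun x => ∫ ω, (NormedSpace.exp (S x + Z ω)).trace ∂μ)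
      (Filter.Eventually.of_forall fun x => integral_nonneg fun ω =>
        (exp_posSemidef (by rw [Matrix.transpose_add, hSsymm, hsymm])).trace_nonneg)
      (hexpS.add (i4.const_mul κ)) (Filter.Eventually.of_forall hinner)
    have hval : ∫ x, ((NormedSpace.exp (S x)).trace + κ * (τ + (C * S x).trace +
          ((NormedSpace.exp (S x)).trace - Fintype.card m) - (1 * S x).trace)) ∂P =
        ∫ x, (NormedSpace.exp (S x)).trace ∂P + κ * (τ + 0 +
          (∫ x, (NormedSpace.exp (S x)).trace ∂P - Fintype.card m) - 0) := by
      rw [integral_add hexpS (i4.const_mul κ), integral_const_mul, integral_sub i3 (hlinS 1),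
        integral_add i1 i2, integral_add (integrable_const τ) (hlinS C),
        integral_sub hexpS (integrable_const _), hlin0, hlin0]
      simp
    have hmono' := hmono.trans_eq hval
    set q := ∫ x, (NormedSpace.exp (S x)).trace ∂P
    have h4 : (1 + κ) * (q - Fintype.card m) ≤ (1 + κ) * (τ * ((1 + κ) ^ n - 1)) :=
      mul_le_mul_of_nonneg_left ih (by linarith)
    have h5 : τ * ((1 + κ) ^ (n + 1) - 1) = (1 + κ) * (τ * ((1 + κ) ^ n - 1)) + κ * τ := by ring
    rw [h5]
    linarith

end Probability

/-! ### Matrix Bernstein inequality with intrinsic dimension -/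

section Bernstein

variable {m : Type*} [Fintype m] [DecidableEq m]

omit [DecidableEq m] in
lemma posSemidef_integral {X : Type*} [MeasurableSpace X] (P : Measure X)
    {W : X → Matrix m m ℝ} (hW : ∀ i j, Integrable (fun x => W x i j) P) {M : Matrix m m ℝ}
    (hM : ∀ i j, ∫ x, W x i j ∂P = M i j) (hpos : ∀ x, (W x).PosSemidef) : M.PosSemidef := by
  refine Matrix.PosSemidef.of_dotProduct_mulVec_nonneg ?_ fun c => ?_
  · ext i j
    rw [Matrix.conjTranspose_apply, star_trivial, ← hM, ← hM]
    exact integral_congr_ae (Filter.Eventually.of_forall fun x => by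
      simpa using (hpos x).1.apply i j)
  · have h1 : ∀ B : Matrix m m ℝ, star c ⬝ᵥ (B *ᵥ c) = (Matrix.vecMulVec c c * B).trace := by
      intro B
      rw [Matrix.trace_mul_comm, Matrix.mul_vecMulVec, Matrix.trace_vecMulVec, dotProduct_comm]
      simp
    rw [h1, ← integral_trace_mul P hW _ M hM]
    exact integral_nonneg fun x => by rw [← h1]; exact (hpos x).dotProduct_mulVec_nonneg c

/-- `0 ≤ Y ≤ F` implies `Y² ≤ F Y`; the commuting product `Y (F - Y)` is written as
`F⁻¹ (Y (F - Y) Y + (F - Y) Y (F - Y))`. -/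
lemma smul_sub_sq_posSemidef {Y : Matrix m m ℝ} {F : ℝ} (hF : 0 < F) (hY : Y.PosSemidef)
    (hYF : (F • (1 : Matrix m m ℝ) - Y).PosSemidef) : (F • Y - Y * Y).PosSemidef := by
  have h1 := hYF.conjTranspose_mul_mul_same Y
  have h2 := hY.conjTranspose_mul_mul_same (F • (1 : Matrix m m ℝ) - Y)
  rw [hY.1.eq] at h1
  rw [hYF.1.eq] at h2
  have h3 := (h1.add h2).smul (inv_nonneg.2 hF.le)
  have e : Y * (F • (1 : Matrix m m ℝ) - Y) * Y +
      (F • (1 : Matrix m m ℝ) - Y) * Y * (F • (1 : Matrix m m ℝ) - Y) = F • (F • Y - Y * Y) := by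
    simp only [mul_sub, sub_mul, Matrix.smul_mul, Matrix.mul_smul, one_mul, mul_one, smul_sub]
    abel
  rwa [e, smul_smul, inv_mul_cancel₀ hF.ne', one_smul] at h3

omit [Fintype m] in
lemma smul_abs_sub_posSemidef {W : Matrix m m ℝ} {F : ℝ} (θ : ℝ)
    (h1 : (F • (1 : Matrix m m ℝ) - W).PosSemidef)
    (h2 : (F • (1 : Matrix m m ℝ) + W).PosSemidef) :
    ((|θ| * F) • (1 : Matrix m m ℝ) - θ • W).PosSemidef := by
  rcases abs_cases θ with ⟨h, h0⟩ | ⟨h, h0⟩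
  · rw [h, mul_smul, ← smul_sub]
    exact h1.smul h0
  · have : (|θ| * F) • (1 : Matrix m m ℝ) - θ • W = (-θ) • (F • (1 : Matrix m m ℝ) + W) := by
      rw [h, mul_smul, smul_add, neg_smul, neg_smul]; abel
    rw [this]
    exact h2.smul (by linarith)

lemma abs_apply_le_of_posSemidef {Y : Matrix m m ℝ} {F : ℝ} (hY : Y.PosSemidef)
    (hYF : (F • (1 : Matrix m m ℝ) - Y).PosSemidef) (i j : m) : |Y i j| ≤ F := by
  have hd : ∀ k, Y k k ≤ F := fun k => by
    have := hYF.diag_nonneg (i := k)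
    simpa using this
  have hs : Y j i = Y i j := by simpa using hY.1.apply i j
  by_cases hij : i = j
  · subst hij
    rw [abs_of_nonneg hY.diag_nonneg]
    exact hd i
  have hq : ∀ r : ℝ, 0 ≤ Y i i + r * Y i j + (r * Y j i + r * r * Y j j) := by
    intro r
    have := hY.dotProduct_mulVec_nonneg (Pi.single i 1 + Pi.single j r)
    have e : star (Pi.single i 1 + Pi.single j r : m → ℝ) ⬝ᵥ
        (Y *ᵥ (Pi.single i 1 + Pi.single j r)) =
        Y i i + r * Y i j + (r * Y j i + r * r * Y j j) := by
      rw [star_trivial, Matrix.mulVec_add, add_dotProduct, single_dotProduct, single_dotProduct]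
      simp
      ring
    rwa [e] at this
  have h1 := hq 1
  have h2 := hq (-1)
  rw [hs] at h1 h2
  rw [abs_le]
  constructor <;> linarith [hd i, hd j]

variable {Ω : Type*} [MeasurableSpace Ω] (μ : Measure Ω) [IsProbabilityMeasure μ]

/-- The one-step bound. With `0 ≤ Y ≤ F` and `C = E Y`, the matrix Bernstein estimate
`e^{θ(Y - C)} ≤ 1 + θ(Y - C) + g θ² (Y - C)²` and the variance bound
`E (Y - C)² ≤ E Y² ≤ F C` are paired with the positive matrix `e^A`. -/
lemma integral_trace_exp_mul_exp_le {Y : Ω → Matrix m m ℝ} {C : Matrix m m ℝ} {F : ℝ} (hF : 0 < F)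
    (hmeas : ∀ i j, Measurable fun ω => Y ω i j) (hY : ∀ ω, (Y ω).PosSemidef)
    (hYF : ∀ ω, (F • (1 : Matrix m m ℝ) - Y ω).PosSemidef)
    (hC : ∀ i j, ∫ ω, Y ω i j ∂μ = C i j) {θ : ℝ} (hθ : |θ| * F < 3)
    (A : Matrix m m ℝ) (hA : Aᵀ = A) :
    ∫ ω, (NormedSpace.exp A * NormedSpace.exp (θ • (Y ω - C))).trace ∂μ ≤
      (NormedSpace.exp A).trace +
        (2 * (1 - |θ| * F / 3))⁻¹ * θ ^ 2 * F * (NormedSpace.exp A * C).trace := by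
  have hYb : ∀ ω i j, |Y ω i j| ≤ F := fun ω => abs_apply_le_of_posSemidef (hY ω) (hYF ω)
  have hYi : ∀ i j, Integrable (fun ω => Y ω i j) μ := fun i j =>
    integrable_comp μ (g := fun B => B i j) (by fun_prop) hmeas F hYb
  have hCpos : C.PosSemidef := posSemidef_integral μ hYi hC hY
  have hFC : (F • (1 : Matrix m m ℝ) - C).PosSemidef := by
    refine posSemidef_integral μ (W := fun ω => F • (1 : Matrix m m ℝ) - Y ω) ?_ ?_ hYF
    · exact fun i j => (integrable_const _).sub (hYi i j)
    · intro i j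
      simp only [Matrix.sub_apply]
      rw [integral_sub (integrable_const _) (hYi i j), hC]
      simp
  set g := (2 * (1 - |θ| * F / 3))⁻¹ with hg
  have hg0 : 0 ≤ g := inv_nonneg.2 (by linarith)
  set E := NormedSpace.exp A with hE
  have hEpos : E.PosSemidef := exp_posSemidef hA
  set L : Matrix m m ℝ := θ • E + (g * θ ^ 2) • (F • E - C * E - E * C) with hL
  have hpt : ∀ ω, (E * NormedSpace.exp (θ • (Y ω - C))).trace ≤
      (E.trace - θ * (E * C).trace + g * θ ^ 2 * (E * (C * C)).trace) + (L * Y ω).trace := by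
    intro ω
    set V := Y ω with hV
    have hsymm : (θ • (V - C))ᵀ = θ • (V - C) := by
      rw [Matrix.transpose_smul, Matrix.transpose_sub]
      congr 2
      · simpa [Matrix.IsHermitian] using (hY ω).1.eq
      · simpa [Matrix.IsHermitian] using hCpos.1.eq
    have hu : (F • (1 : Matrix m m ℝ) - (V - C)).PosSemidef := by
      have := (hYF ω).add hCpos
      rwa [show F • (1 : Matrix m m ℝ) - V + C = F • (1 : Matrix m m ℝ) - (V - C) by abel] at this
    have hl : (F • (1 : Matrix m m ℝ) + (V - C)).PosSemidef := by
      have := (hY ω).add hFC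
      rwa [show V + (F • (1 : Matrix m m ℝ) - C) = F • (1 : Matrix m m ℝ) + (V - C) by abel] at this
    have h1 := smul_abs_sub_posSemidef θ hu hl
    have h2 := smul_abs_sub_posSemidef (-θ) hu hl
    rw [abs_neg, neg_smul, sub_neg_eq_add] at h2
    have h3 := trace_mul_nonneg hEpos (quadratic_sub_exp_posSemidef hsymm hθ h1 h2)
    rw [← hg] at h3
    have h4 := trace_mul_nonneg hEpos (smul_sub_sq_posSemidef hF (hY ω) (hYF ω))
    have e1 : (E * V * C).trace = (C * E * V).trace := by
      rw [Matrix.trace_mul_comm, mul_assoc]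
    have e3 : (E * (1 + θ • (V - C) + g • (θ • (V - C) * θ • (V - C)) -
        NormedSpace.exp (θ • (V - C)))).trace =
        E.trace + θ * ((E * V).trace - (E * C).trace) + g * θ ^ 2 * ((E * (V * V)).trace -
          (C * E * V).trace - (E * C * V).trace + (E * (C * C)).trace)
          - (E * NormedSpace.exp (θ • (V - C))).trace := by
      rw [← e1]
      simp only [mul_add, mul_sub, sub_mul, Matrix.mul_smul, Matrix.smul_mul, mul_one,
        Matrix.trace_sub, Matrix.trace_add, Matrix.trace_smul, smul_eq_mul, ← mul_assoc]
      ring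
    have e4 : (E * (F • V - V * V)).trace = F * (E * V).trace - (E * (V * V)).trace := by
      simp only [mul_sub, Matrix.mul_smul, Matrix.trace_sub, Matrix.trace_smul, smul_eq_mul]
    have e5 : (L * V).trace = θ * (E * V).trace + g * θ ^ 2 * (F * (E * V).trace -
        (C * E * V).trace - (E * C * V).trace) := by
      simp only [hL, add_mul, sub_mul, Matrix.smul_mul, Matrix.trace_sub, Matrix.trace_add,
        Matrix.trace_smul, smul_eq_mul]
    rw [e3] at h3
    rw [e4] at h4
    rw [e5]
    have h5 := mul_nonneg (mul_nonneg hg0 (sq_nonneg θ)) h4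
    linarith
  have hcont : Continuous fun B : Matrix m m ℝ => (L * B).trace :=
    (continuous_const.matrix_mul continuous_id).matrix_trace
  have hLi : Integrable (fun ω => (L * Y ω).trace) μ := integrable_comp μ hcont hmeas F hYb
  have hmono := integral_mono_of_nonneg (μ := μ)
    (f := fun ω => (E * NormedSpace.exp (θ • (Y ω - C))).trace)
    (Filter.Eventually.of_forall fun ω => trace_mul_nonneg hEpos (exp_posSemidef (by
      rw [Matrix.transpose_smul, Matrix.transpose_sub]
      congr 2
      · simpa [Matrix.IsHermitian] using (hY ω).1.eq
      · simpa [Matrix.IsHermitian] using hCpos.1.eq)))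
    ((integrable_const _).add hLi) (Filter.Eventually.of_forall hpt)
  refine hmono.trans ?_
  have hint := integral_add (μ := μ) (integrable_const
    (E.trace - θ * (E * C).trace + g * θ ^ 2 * (E * (C * C)).trace)) hLi
  refine hint.le.trans ?_
  rw [integral_trace_mul μ hYi L C hC]
  have e6 : (L * C).trace = θ * (E * C).trace + g * θ ^ 2 * (F * (E * C).trace -
      (E * (C * C)).trace - (E * (C * C)).trace) := by
    have e1 : (C * E * C).trace = (E * (C * C)).trace := by
      rw [mul_assoc, Matrix.trace_mul_comm, mul_assoc]
    rw [← e1]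
    simp only [hL, add_mul, sub_mul, Matrix.smul_mul, Matrix.trace_sub, Matrix.trace_add,
      Matrix.trace_smul, smul_eq_mul]
    rw [e1, mul_assoc E C C]
  have hCC : (C * C).PosSemidef := by
    have := Matrix.posSemidef_conjTranspose_mul_self C
    rwa [hCpos.1.eq] at this
  have h7 := mul_nonneg (mul_nonneg hg0 (sq_nonneg θ)) (trace_mul_nonneg hEpos hCC)
  rw [e6]
  simp only [integral_const, probReal_univ, smul_eq_mul, one_mul]
  linarith

/-- Tail bound for the spectral norm of `∑ (Y (x k) - C)`, expressed through quadratic forms: Markov's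
inequality for `tr (e^{θS} - 1) + tr (e^{-θS} - 1)`, whose expectation is bounded by the
intrinsic-dimension recursion with `τ ≥ tr C`. -/
lemma measure_quadratic_form_gt_le {Y : Ω → Matrix m m ℝ} {C : Matrix m m ℝ} {F : ℝ} (hF : 0 < F)
    (hmeas : ∀ i j, Measurable fun ω => Y ω i j) (hY : ∀ ω, (Y ω).PosSemidef)
    (hYF : ∀ ω, (F • (1 : Matrix m m ℝ) - Y ω).PosSemidef)
    (hC : ∀ i j, ∫ ω, Y ω i j ∂μ = C i j) (hC1 : ((1 : Matrix m m ℝ) - C).PosSemidef)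
    {τ : ℝ} (hτ : C.trace ≤ τ) {θ : ℝ} (hθ0 : 0 < θ) (hθ : θ * F < 3) (n : ℕ) {T : ℝ}
    (hT : 0 < T) :
    (Measure.pi fun _ : Fin n => μ) {x | ∃ c : m → ℝ,
        T * (c ⬝ᵥ c) < |c ⬝ᵥ ((∑ k, (Y (x k) - C)) *ᵥ c)|} ≤
      ENNReal.ofReal (2 * τ * (Real.exp (n * ((2 * (1 - θ * F / 3))⁻¹ * θ ^ 2 * F)) - 1) /
        (Real.exp (θ * T) - 1 - θ * T)) := by
  set P := Measure.pi fun _ : Fin n => μ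
  set κ := (2 * (1 - θ * F / 3))⁻¹ * θ ^ 2 * F with hκ
  have hg0 : 0 ≤ (2 * (1 - θ * F / 3))⁻¹ := inv_nonneg.2 (by linarith)
  have hκ0 : 0 ≤ κ := by positivity
  have hYb : ∀ ω i j, |Y ω i j| ≤ F := fun ω => abs_apply_le_of_posSemidef (hY ω) (hYF ω)
  have hYi : ∀ i j, Integrable (fun ω => Y ω i j) μ := fun i j =>
    integrable_comp μ (g := fun B => B i j) (by fun_prop) hmeas F hYb
  have hCpos : C.PosSemidef := posSemidef_integral μ hYi hC hY
  have hτ0 : 0 ≤ τ := hCpos.trace_nonneg.trans hτ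
  have hCt : Cᵀ = C := by simpa [Matrix.IsHermitian] using hCpos.1.eq
  have hYt : ∀ ω, (Y ω)ᵀ = Y ω := fun ω => by simpa [Matrix.IsHermitian] using (hY ω).1.eq
  obtain ⟨Kc, hKc⟩ : ∃ Kc : ℝ, ∀ i j, |C i j| ≤ Kc := by
    refine ⟨F, fun i j => ?_⟩
    rw [← hC]
    refine (abs_integral_le_integral_abs).trans ?_
    refine (integral_mono (hYi i j).abs (integrable_const F) fun ω => hYb ω i j).trans ?_
    simp
  have hmeasZ : ∀ η : ℝ, ∀ i j, Measurable fun ω => (η • (Y ω - C)) i j := fun η i j => by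
    simp only [Matrix.smul_apply, Matrix.sub_apply]
    exact ((hmeas i j).sub_const _).const_smul η
  have hbddZ : ∀ η : ℝ, ∀ ω i j, |(η • (Y ω - C)) i j| ≤ |η| * (F + Kc) := fun η ω i j => by
    simp only [Matrix.smul_apply, Matrix.sub_apply, smul_eq_mul, abs_mul]
    gcongr
    exact (abs_sub _ _).trans (add_le_add (hYb ω i j) (hKc i j))
  have key : ∀ η : ℝ, |η| = θ →
      ∫ x : Fin n → Ω, (NormedSpace.exp (∑ k, η • (Y (x k) - C))).trace ∂P - Fintype.card m
        ≤ τ * (Real.exp (n * κ) - 1) := by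
    intro η hη
    have h := integral_trace_exp_sum_le μ (Z := fun ω => η • (Y ω - C)) (K := |η| * (F + Kc))
      (fun ω => by rw [Matrix.transpose_smul, Matrix.transpose_sub, hYt, hCt]) (hmeasZ η) (hbddZ η)
      (fun i j => by
        simp only [Matrix.smul_apply, Matrix.sub_apply, smul_eq_mul]
        rw [integral_const_mul, integral_sub (hYi i j) (integrable_const _), hC]
        simp) hC1 hτ hκ0
      (fun A hA => by
        have := integral_trace_exp_mul_exp_le μ hF hmeas hY hYF hC (θ := η) (by rwa [hη]) A hA
        rwa [hη, ← sq_abs, hη, ← hκ] at this) n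
    refine h.trans ?_
    gcongr
    rw [Real.exp_nat_mul]
    gcongr
    linarith [Real.add_one_le_exp κ]
  set f : (Fin n → Ω) → ℝ := fun x =>
    ((NormedSpace.exp (∑ k, θ • (Y (x k) - C))).trace - Fintype.card m) +
    ((NormedSpace.exp (∑ k, (-θ) • (Y (x k) - C))).trace - Fintype.card m) with hf
  have hi : ∀ η : ℝ, Integrable (fun x : Fin n → Ω =>
      (NormedSpace.exp (∑ k, η • (Y (x k) - C))).trace - (Fintype.card m : ℝ)) P := fun η =>
    (integrable_comp P continuous_trace_exp (measurable_sum_apply (hmeasZ η) n) _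
      (abs_sum_apply_le (hbddZ η))).sub (integrable_const _)
  have hfi : Integrable f P := (hi θ).add (hi (-θ))
  have hfint : ∫ x, f x ∂P ≤ 2 * τ * (Real.exp (n * κ) - 1) := by
    have h1 := key θ (abs_of_pos hθ0)
    have h2 := key (-θ) (by rw [abs_neg, abs_of_pos hθ0])
    have hsub : ∀ η : ℝ, ∫ x : Fin n → Ω, ((NormedSpace.exp (∑ k, η • (Y (x k) - C))).trace
        - (Fintype.card m : ℝ)) ∂P = ∫ x : Fin n → Ω,
        (NormedSpace.exp (∑ k, η • (Y (x k) - C))).trace ∂P - Fintype.card m := fun η => by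
      rw [integral_sub (integrable_comp P continuous_trace_exp (measurable_sum_apply (hmeasZ η) n) _
        (abs_sum_apply_le (hbddZ η))) (integrable_const _)]
      simp
    rw [hf, integral_add (hi θ) (hi (-θ)), hsub, hsub]
    linarith
  have hneg : ∀ x : Fin n → Ω, ∑ k, (-θ) • (Y (x k) - C) = -∑ k, θ • (Y (x k) - C) := fun x => by
    simp only [neg_smul, Finset.sum_neg_distrib]
  have hst : ∀ x : Fin n → Ω, (∑ k, θ • (Y (x k) - C))ᵀ = ∑ k, θ • (Y (x k) - C) := fun x => by
    simp only [Matrix.transpose_sum, Matrix.transpose_smul, Matrix.transpose_sub, hYt, hCt]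
  have hf0 : ∀ x, 0 ≤ f x := by
    intro x
    have h1 := (exp_sub_posSemidef (hst x)).trace_nonneg
    have h2 := (exp_sub_posSemidef (A := -∑ k, θ • (Y (x k) - C))
      (by rw [Matrix.transpose_neg, hst])).trace_nonneg
    simp only [Matrix.trace_sub, Matrix.trace_one, Matrix.trace_neg] at h1 h2
    simp only [hf]
    rw [hneg]
    linarith
  have hφ : 0 < Real.exp (θ * T) - 1 - θ * T := by
    have := Real.add_one_lt_exp (x := θ * T) (by positivity)
    linarith
  have hmarkov := mul_meas_ge_le_integral_of_nonneg (Filter.Eventually.of_forall hf0) hfi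
    (Real.exp (θ * T) - 1 - θ * T)
  have hsubset : {x : Fin n → Ω | ∃ c : m → ℝ,
        T * (c ⬝ᵥ c) < |c ⬝ᵥ ((∑ k, (Y (x k) - C)) *ᵥ c)|} ⊆
      {x | Real.exp (θ * T) - 1 - θ * T ≤ f x} := by
    rintro x ⟨c, hc⟩
    simp only [Set.mem_ofPred_eq, hf]
    rw [hneg]
    refine trace_exp_ge (hst x) (by positivity) c ?_
    rw [← Finset.smul_sum, Matrix.smul_mulVec, dotProduct_smul, smul_eq_mul, abs_mul,
      abs_of_pos hθ0, mul_assoc]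
    exact mul_lt_mul_of_pos_left hc hθ0
  refine (measure_mono hsubset).trans ?_
  rw [← ofReal_measureReal]
  refine ENNReal.ofReal_le_ofReal ?_
  rw [le_div_iff₀ hφ, mul_comm]
  exact hmarkov.trans hfint

/-- The choice of `θ` in the tail bound. With `T = 4Fβ/3 + √(2NFβ)` and
`θ = T / (NF + FT/3)`, the exponent `N θ² F / (2 (1 - θF/3))` equals `s/2` for `s = θT`, and
`s ≥ 2β`; then `e^{s/2} e^β ≤ e^s`, which together with `e^s ≥ 1 + s + s²/2` and `e^β ≥ 4` gives
`(e^{s/2} - 1) e^β ≤ 2 (e^s - 1 - s)`. -/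
lemma bernstein_inversion {F β N : ℝ} (hF : 0 < F) (hN : 0 < N) (hβ : 0 < β)
    (hβ4 : 4 ≤ Real.exp β) :
    ∃ θ : ℝ, 0 < θ ∧ θ * F < 3 ∧
      (Real.exp (N * ((2 * (1 - θ * F / 3))⁻¹ * θ ^ 2 * F)) - 1) /
        (Real.exp (θ * (4 * F * β / 3 + √(2 * N * F * β))) - 1
          - θ * (4 * F * β / 3 + √(2 * N * F * β))) ≤ 2 * Real.exp (-β) := by
  set w := √(2 * N * F * β) with hw
  have hw2 : w ^ 2 = 2 * N * F * β := Real.sq_sqrt (by positivity)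
  have hw0 : 0 < w := Real.sqrt_pos.2 (by positivity)
  set T := 4 * F * β / 3 + w with hT
  have hT0 : 0 < T := by positivity
  have hden : 0 < N * F + F * T / 3 := by positivity
  refine ⟨T / (N * F + F * T / 3), by positivity, ?_, ?_⟩
  · rw [div_mul_eq_mul_div, div_lt_iff₀ hden]
    have : 0 < N * F := by positivity
    nlinarith
  set θ := T / (N * F + F * T / 3) with hθ
  have hθ0 : 0 < θ := by positivity
  set s := θ * T with hs
  have hκ : N * ((2 * (1 - θ * F / 3))⁻¹ * θ ^ 2 * F) = s / 2 := by
    have h1 : 1 - θ * F / 3 = N * F / (N * F + F * T / 3) := by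
      rw [hθ]; field_simp; ring
    rw [h1, hs]
    have h2 : T = θ * (N * F + F * T / 3) := by rw [hθ]; field_simp
    have h3 : (2 * (N * F / (N * F + F * T / 3)))⁻¹ = (N * F + F * T / 3) / (2 * (N * F)) := by
      field_simp
    rw [h3]
    calc N * ((N * F + F * T / 3) / (2 * (N * F)) * θ ^ 2 * F)
        = θ * (θ * (N * F + F * T / 3)) / 2 := by field_simp
      _ = θ * T / 2 := by rw [← h2]
  have hsβ : 2 * β ≤ s := by
    rw [hs, hθ, div_mul_eq_mul_div, le_div_iff₀ hden]
    have : 0 < F * β := by positivity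
    nlinarith [mul_pos this hw0, mul_pos this this]
  rw [hκ]
  have hφ : 0 < Real.exp s - 1 - s := by
    have := Real.add_one_lt_exp (x := s) (by linarith)
    linarith
  rw [div_le_iff₀ hφ]
  have h1 : Real.exp (s / 2) * Real.exp β ≤ Real.exp s := by
    rw [← Real.exp_add, Real.exp_le_exp]; linarith
  have h2 := Real.quadratic_le_exp_of_nonneg (x := s) (by linarith)
  have h3 : (Real.exp (s / 2) - 1) * Real.exp β ≤ 2 * (Real.exp s - 1 - s) := by
    nlinarith [sq_nonneg (s - 1)]
  have h4 : Real.exp (s / 2) - 1 = Real.exp (-β) * ((Real.exp (s / 2) - 1) * Real.exp β) := by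
    rw [mul_comm (_ - _), ← mul_assoc, ← Real.exp_add]; simp
  rw [h4]
  calc _ ≤ Real.exp (-β) * (2 * (Real.exp s - 1 - s)) := by gcongr
    _ = _ := by ring

end Bernstein

/-! ### Compression to finitely many basis vectors and resolvent identities -/

section Hilbert

variable {H : Type*} [NormedAddCommGroup H] [InnerProductSpace ℝ H]

/-- Distinct vectors of an orthonormal family are at distance `√2`, so the balls of radius `1/2`
around them are disjoint. -/
lemma countable_of_orthonormal [TopologicalSpace.SeparableSpace H] {ι : Type*} {v : ι → H}
    (hv : Orthonormal ℝ v) : Countable ι := by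
  refine Pairwise.countable_of_isOpen_disjoint (s := fun i => Metric.ball (v i) (1 / 2)) ?_
    (fun _ => Metric.isOpen_ball) (fun i => ⟨v i, Metric.mem_ball_self (by norm_num)⟩)
  intro i j hij
  refine Metric.ball_disjoint_ball ?_
  have h : ‖v i - v j‖ ^ 2 = 2 := by
    rw [norm_sub_sq_real, hv.1, hv.1, hv.2 hij]; norm_num
  rw [dist_eq_norm]
  nlinarith [norm_nonneg (v i - v j)]

/-- A positive operator has norm at most its trace: by Parseval and Cauchy–Schwarz,
`‖D u‖² = ∑ ⟪D u, bᵢ⟫² ≤ ∑ ⟪D u, u⟫ ⟪D bᵢ, bᵢ⟫`. -/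
lemma norm_le_trace {D : H →L[ℝ] H} (hD : D.IsPositive) {ι : Type*} (b : HilbertBasis ι ℝ H)
    {t : ℝ} (ht : HasSum (fun i => ⟪D (b i), b i⟫) t) : ‖D‖ ≤ t := by
  have hsymm : ∀ u v, ⟪D u, v⟫ = ⟪D v, u⟫ := fun u v => by
    rw [hD.inner_left_eq_inner_right, real_inner_comm]
  have hcs : ∀ u v, ⟪D u, v⟫ ^ 2 ≤ ⟪D u, u⟫ * ⟪D v, v⟫ := by
    intro u v
    have h := discrim_le_zero (a := ⟪D u, u⟫) (b := 2 * ⟪D u, v⟫) (c := ⟪D v, v⟫) fun r => by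
      have := hD.inner_nonneg_left (r • u + v)
      simp only [map_add, map_smul, inner_add_left, inner_add_right, real_inner_smul_left,
        real_inner_smul_right, hsymm v u] at this
      linarith
    rw [discrim] at h
    nlinarith
  have ht0 : 0 ≤ t := ht.nonneg fun i => hD.inner_nonneg_left _
  refine ContinuousLinearMap.opNorm_le_bound _ ht0 fun u => ?_
  have h1 := b.hasSum_inner_mul_inner (D u) (D u)
  have h2 : ‖D u‖ ^ 2 ≤ ⟪D u, u⟫ * t := by
    rw [← real_inner_self_eq_norm_sq]
    refine hasSum_le (fun i => ?_) h1 (ht.mul_left _)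
    rw [real_inner_comm (D u) (b i), ← sq]
    exact hcs _ _
  have h3 := real_inner_le_norm (D u) u
  have h4 : ‖D u‖ * ‖D u‖ ≤ ‖D u‖ * (t * ‖u‖) := by nlinarith
  rcases (norm_nonneg (D u)).eq_or_lt with h0 | h0
  · rw [← h0]; positivity
  · exact le_of_mul_le_mul_left h4 h0

/-- For a symmetric operator, a bound on the quadratic form over finite combinations of a Hilbert
basis bounds the operator norm. -/
lemma norm_le_of_abs_inner_sum_le [CompleteSpace H] {X : H →L[ℝ] H}
    (hX : ∀ u v, ⟪X u, v⟫ = ⟪u, X v⟫)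
    {ι : Type*} (b : HilbertBasis ι ℝ H) {t : ℝ} (ht : 0 ≤ t)
    (h : ∀ (s : Finset ι) (c : ι → ℝ), |⟪∑ i ∈ s, c i • b i, X (∑ i ∈ s, c i • b i)⟫| ≤
      t * ‖∑ i ∈ s, c i • b i‖ ^ 2) : ‖X‖ ≤ t := by
  rw [X.norm_eq_iSup_rayleighQuotient hX]
  have hall : ∀ u, |⟪u, X u⟫| ≤ t * ‖u‖ ^ 2 := by
    intro u
    have hu : Filter.Tendsto (fun s : Finset ι => ∑ i ∈ s, b.repr u i • b i) Filter.atTop (nhds u) :=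
      b.hasSum_repr u
    refine le_of_tendsto_of_tendsto' ((Continuous.tendsto (f := fun u => |⟪u, X u⟫|)
      (by fun_prop) u).comp hu) ((Continuous.tendsto (f := fun u => t * ‖u‖ ^ 2)
      (by fun_prop) u).comp hu) fun s => h s _
  refine ciSup_le fun u => ?_
  rw [ContinuousLinearMap.rayleighQuotient, abs_div, abs_sq]
  refine div_le_of_le_mul₀ (by positivity) ht ?_
  rw [ContinuousLinearMap.reApplyInnerSelf_apply, real_inner_comm]
  exact hall u

/-- The compression of the operator `A` to the span of finitely many basis vectors, as a
matrix. -/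
def compress {ι : Type*} (b : ι → H) (s : Finset ι) (A : H →L[ℝ] H) : Matrix s s ℝ :=
  Matrix.of fun i j => ⟪b i, A (b j)⟫

variable {ι : Type*} (b : ι → H) (s : Finset ι)

lemma dotProduct_compress (A : H →L[ℝ] H) (c : s → ℝ) :
    c ⬝ᵥ (compress b s A *ᵥ c) = ⟪∑ i, c i • b i, A (∑ i, c i • b i)⟫ := by
  simp only [dotProduct, Matrix.mulVec, compress, Matrix.of_apply, map_sum, map_smul, sum_inner,
    inner_sum, real_inner_smul_left, real_inner_smul_right, Finset.mul_sum]
  rw [Finset.sum_comm]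
  refine Finset.sum_congr rfl fun i _ => Finset.sum_congr rfl fun j _ => ?_
  ring

lemma compress_posSemidef {A : H →L[ℝ] H} (hA : ∀ u v, ⟪A u, v⟫ = ⟪u, A v⟫)
    (hpos : ∀ u, 0 ≤ ⟪u, A u⟫) : (compress b s A).PosSemidef := by
  refine Matrix.PosSemidef.of_dotProduct_mulVec_nonneg ?_ fun c => ?_
  · ext i j
    simp only [Matrix.conjTranspose_apply, compress, Matrix.of_apply, star_trivial]
    rw [← hA, real_inner_comm]
  · rw [star_trivial, dotProduct_compress]
    exact hpos _

lemma compress_sub (A B : H →L[ℝ] H) :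
    compress b s (A - B) = compress b s A - compress b s B := by
  ext i j; simp [compress, inner_sub_right]

lemma compress_smul (r : ℝ) (A : H →L[ℝ] H) :
    compress b s (r • A) = r • compress b s A := by
  ext i j; simp [compress, real_inner_smul_right]

lemma compress_sum {κ : Type*} (t : Finset κ) (A : κ → H →L[ℝ] H) :
    compress b s (∑ k ∈ t, A k) = ∑ k ∈ t, compress b s (A k) := by
  ext i j; simp [compress, Matrix.sum_apply, inner_sum]

lemma compress_one [DecidableEq ι] (hb : Orthonormal ℝ b) :
    compress b s (1 : H →L[ℝ] H) = 1 := by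
  ext i j
  rw [compress, Matrix.of_apply, Matrix.one_apply]
  exact (orthonormal_iff_ite.1 hb i j).trans (by simp only [Subtype.coe_inj])

lemma inner_sum_smul_self (hb : Orthonormal ℝ b) (c : s → ℝ) :
    ‖∑ i, c i • b i‖ ^ 2 = c ⬝ᵥ c := by
  classical
  have := dotProduct_compress b s 1 c
  rw [compress_one b s hb, Matrix.one_mulVec] at this
  rw [this, ← real_inner_self_eq_norm_sq]
  rfl

end Hilbert

section Resolvent

variable {H : Type*} [NormedAddCommGroup H] [InnerProductSpace ℝ H] {D R : H →L[ℝ] H} {lam : ℝ}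

/-- An operator `R` with `R² = (D + λ)⁻¹` commutes with `D`. -/
lemma sqrt_inv_commute (hR₁ : R * R * (D + lam • 1) = 1) (hR₂ : (D + lam • 1) * (R * R) = 1) :
    D * R = R * D := by
  have h : R * (D + lam • 1) = (D + lam • 1) * R := by
    calc R * (D + lam • 1) = ((D + lam • 1) * (R * R)) * (R * (D + lam • 1)) := by
          rw [hR₂, one_mul]
      _ = ((D + lam • 1) * R) * (R * R * (D + lam • 1)) := by simp only [mul_assoc]
      _ = _ := by rw [hR₁, mul_one]
  simp only [mul_add, add_mul, mul_smul_comm, smul_mul_assoc, mul_one, one_mul] at h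
  exact (add_right_cancel h).symm

/-- `R (D + λ) R = 1`, rewritten for `R D R`. -/
lemma sqrt_inv_conj (hR₁ : R * R * (D + lam • 1) = 1) (hR₂ : (D + lam • 1) * (R * R) = 1) :
    R * D * R = 1 - lam • (R * R) := by
  rw [← sqrt_inv_commute hR₁ hR₂, ← hR₂]
  simp only [add_mul, smul_mul_assoc, one_mul, mul_assoc]
  abel

lemma one_sub_conj_nonneg (hR : R.IsPositive) (hlam : 0 ≤ lam)
    (hR₁ : R * R * (D + lam • 1) = 1) (hR₂ : (D + lam • 1) * (R * R) = 1) (u : H) :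
    0 ≤ ⟪u, (1 - R * D * R) u⟫ := by
  have h : 1 - R * D * R = lam • (R * R) := by rw [sqrt_inv_conj hR₁ hR₂]; abel
  have e : ⟪u, R (R u)⟫ = ‖R u‖ ^ 2 := by
    rw [← hR.inner_left_eq_inner_right, real_inner_self_eq_norm_sq]
  rw [h, smul_apply, real_inner_smul_right, mul_apply_eq_comp, e]
  positivity

/-- `D - λ R D R = (D R)* (D R)`, because `1 - λ R² = R D R`. -/
lemma smul_conj_le (hD : D.IsPositive) (hR : R.IsPositive)
    (hR₁ : R * R * (D + lam • 1) = 1) (hR₂ : (D + lam • 1) * (R * R) = 1) (u : H) :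
    lam * ⟪u, (R * D * R) u⟫ ≤ ⟪D u, u⟫ := by
  have hc := sqrt_inv_commute hR₁ hR₂
  have h2 : lam • (R * D * R) = D - R * (D * (D * R)) := by
    have : lam • (R * R) = 1 - R * D * R := by rw [sqrt_inv_conj hR₁ hR₂]; abel
    calc lam • (R * D * R) = D * (lam • (R * R)) := by
          rw [← hc, mul_smul_comm, mul_assoc]
      _ = D - R * (D * (D * R)) := by
          rw [this, mul_sub, mul_one, mul_assoc R D R, ← mul_assoc D R, hc, mul_assoc]
  have e : ⟪u, R (D (D (R u)))⟫ = ‖D (R u)‖ ^ 2 := by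
    rw [← hR.inner_left_eq_inner_right, ← hD.inner_left_eq_inner_right,
      real_inner_self_eq_norm_sq]
  have h3 := congrArg (fun A : H →L[ℝ] H => ⟪u, A u⟫) h2
  simp only [smul_apply, real_inner_smul_right, sub_apply,
    mul_apply_eq_comp, inner_sub_right, e] at h3
  rw [real_inner_comm u (D u)]
  simp only [mul_apply_eq_comp]
  nlinarith [sq_nonneg ‖D (R u)‖]

end Resolvent

end RegConc

/-- Concentration of the regularized empirical operator `D̂ₙ` around
`D = ∫ ∑ⱼ ψⱼ(x) ⊗ ψⱼ(x) dμ(x)`: with probability at least `1 - δ` over the i.i.d. samples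
`x₁, …, xₙ ∼ μ`, `‖(D + λI)^{-1/2} (D̂ₙ - D) (D + λI)^{-1/2}‖ ≤ 4F_λβ/(3n) + √(2F_λβ/n)`,
where `β = log(4 Tr D / (λδ))` and `(D + λI)^{-1/2}` is the inverse of the positive square
root of `D + λI`. -/
theorem concentration_regularized_empirical_D
    {H : Type*} [NormedAddCommGroup H] [InnerProductSpace ℝ H] [CompleteSpace H]
    [TopologicalSpace.SeparableSpace H] [MeasurableSpace H] [BorelSpace H]
    {Ω : Type*} [MeasurableSpace Ω] (μ : Measure Ω) [IsProbabilityMeasure μ]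
    (d : ℕ) (ψ : Fin d → Ω → H) (hmeas : ∀ j, Measurable (ψ j))
    (D : H →L[ℝ] H)
    (hD : D = ∫ x, (∑ j, (innerSL ℝ (ψ j x)).smulRight (ψ j x)) ∂μ)
    (hDpos : D.IsPositive)
    {ι : Type*} (b : HilbertBasis ι ℝ H)
    (trD : ℝ) (htrD : HasSum (fun i => ⟪D (b i), b i⟫) trD)
    (lam : ℝ) (hlam : 0 < lam) (hlamD : lam ≤ ‖D‖)
    (R : H →L[ℝ] H) (hRpos : R.IsPositive)
    (hR₁ : (R ∘L R) ∘L (D + lam • (1 : H →L[ℝ] H)) = 1)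
    (hR₂ : (D + lam • (1 : H →L[ℝ] H)) ∘L (R ∘L R) = 1)
    (Fl : ℝ) (hFl : 0 ≤ Fl) (hFbound : ∀ x, ∑ j, ‖R (ψ j x)‖ ^ 2 ≤ Fl)
    (n : ℕ) (hn : 0 < n)
    (δ : ℝ) (hδ : δ ∈ Set.Ioc (0 : ℝ) 1) :
    ENNReal.ofReal (1 - δ) ≤
      (Measure.pi fun _ : Fin n => μ)
        {x | ‖R ∘L
            (((n : ℝ)⁻¹ • ∑ i : Fin n, ∑ j, (innerSL ℝ (ψ j (x i))).smulRight (ψ j (x i))) - D)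
              ∘L R‖ ≤
          4 * Fl * Real.log (4 * trD / (lam * δ)) / (3 * n) +
            Real.sqrt (2 * Fl * Real.log (4 * trD / (lam * δ)) / n)} := by
  classical
  obtain ⟨hδ0, hδ1⟩ := hδ
  have hn' : (0 : ℝ) < n := by exact_mod_cast hn
  have : Countable ι := RegConc.countable_of_orthonormal b.orthonormal
  set Z : Ω → H →L[ℝ] H := fun x => ∑ j, (innerSL ℝ (ψ j x)).smulRight (ψ j x) with hZ
  have hZin : ∀ x u v, ⟪u, Z x v⟫ = ∑ j, ⟪ψ j x, u⟫ * ⟪ψ j x, v⟫ := by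
    intro x u v
    simp only [hZ, sum_apply, ContinuousLinearMap.smulRight_apply, innerSL_apply_apply, inner_sum,
      real_inner_smul_right]
    exact Finset.sum_congr rfl fun j _ => by rw [real_inner_comm u, mul_comm]
  have hZsymm : ∀ x u v, ⟪Z x u, v⟫ = ⟪u, Z x v⟫ := fun x u v => by
    rw [real_inner_comm, hZin, hZin]
    exact Finset.sum_congr rfl fun j _ => mul_comm _ _
  have hD0 : D ≠ 0 := norm_pos_iff.1 (hlam.trans_le hlamD)
  -- a non-integrable integrand would have Bochner integral zero, but `D ≠ 0`
  have hZi : Integrable Z μ := by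
    by_contra h
    exact hD0 (hD.trans (integral_undef h))
  have hDin : ∀ u v, ∫ x, ⟪u, Z x v⟫ ∂μ = ⟪u, D v⟫ := by
    intro u v
    rw [hD]
    exact ((innerSL ℝ u).comp (ContinuousLinearMap.apply ℝ H v)).integral_comp_comm hZi
  have hR : ∀ u v, ⟪R u, v⟫ = ⟪u, R v⟫ := hRpos.inner_left_eq_inner_right
  have hR₁' : R * R * (D + lam • 1) = 1 := hR₁
  have hR₂' : (D + lam • 1) * (R * R) = 1 := hR₂
  have hF : 0 < Fl := by
    refine lt_of_le_of_ne hFl fun h0 => hD0 ?_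
    have hRinj : ∀ u, R u = 0 → u = 0 := fun u hu => by
      have := congrArg (fun A : H →L[ℝ] H => A u) hR₂'
      simpa [mul_apply_eq_comp, hu] using this.symm
    have hψ : ∀ j x, ψ j x = 0 := fun j x => by
      have h1 := hFbound x
      rw [← h0] at h1
      have h2 := Finset.single_le_sum (f := fun j => ‖R (ψ j x)‖ ^ 2) (fun j _ => by positivity)
        (Finset.mem_univ j)
      have h3 : ‖R (ψ j x)‖ ^ 2 = 0 := le_antisymm (h2.trans h1) (by positivity)
      exact hRinj _ (by simpa using h3)
    rw [hD]
    simp [hZ, hψ]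
  have htr : lam ≤ trD := hlamD.trans (RegConc.norm_le_trace hDpos b htrD)
  have htr0 : 0 < trD := hlam.trans_le htr
  have hq4 : 4 ≤ 4 * trD / (lam * δ) := by
    rw [le_div_iff₀ (by positivity)]
    nlinarith
  set β := Real.log (4 * trD / (lam * δ)) with hβ
  have hexpβ : Real.exp β = 4 * trD / (lam * δ) := Real.exp_log (by positivity)
  have hβ0 : 0 < β := Real.log_pos (by linarith)
  obtain ⟨θ, hθ0, hθ3, hθ⟩ := RegConc.bernstein_inversion hF hn' hβ0 (hexpβ ▸ hq4)
  set T := 4 * Fl * β / 3 + √(2 * n * Fl * β) with hT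
  have hT0 : 0 < T := by positivity
  set t := 4 * Fl * β / (3 * n) + √(2 * Fl * β / n) with ht
  have hTt : T = n * t := by
    have h1 : √(2 * n * Fl * β) = n * √(2 * Fl * β / n) := by
      rw [show 2 * n * Fl * β = n ^ 2 * (2 * Fl * β / n) by field_simp,
        Real.sqrt_mul (by positivity), Real.sqrt_sq hn'.le]
    rw [hT, ht, h1]
    field_simp
  have ht0 : 0 ≤ t := by positivity
  set A : Ω → H →L[ℝ] H := fun x => R * Z x * R with hA
  have hAin : ∀ x u v, ⟪u, A x v⟫ = ∑ j, ⟪ψ j x, R u⟫ * ⟪ψ j x, R v⟫ := fun x u v => by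
    rw [← hZin, hR]
    rfl
  have hAsymm : ∀ x u v, ⟪A x u, v⟫ = ⟪u, A x v⟫ := fun x u v => by
    rw [real_inner_comm, hAin, hAin]
    exact Finset.sum_congr rfl fun j _ => mul_comm _ _
  have hAF : ∀ x u, ⟪u, A x u⟫ ≤ Fl * ‖u‖ ^ 2 := by
    intro x u
    rw [hAin]
    refine le_trans (Finset.sum_le_sum fun j _ => ?_)
      ((Finset.sum_mul _ _ _).symm.le.trans (mul_le_mul_of_nonneg_right (hFbound x) (sq_nonneg ‖u‖)))
    rw [← hR, ← sq, ← mul_pow, sq_le_sq, abs_of_nonneg (a := ‖R (ψ j x)‖ * ‖u‖) (by positivity)]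
    exact abs_real_inner_le_norm _ _
  have hRDRsymm : ∀ u v, ⟪(R * D * R) u, v⟫ = ⟪u, (R * D * R) v⟫ := fun u v => by
    simp only [mul_apply_eq_comp]
    rw [hR, hDpos.inner_left_eq_inner_right, hR]
  set X : (Fin n → Ω) → H →L[ℝ] H := fun x =>
    R ∘L (((n : ℝ)⁻¹ • ∑ i : Fin n, Z (x i)) - D) ∘L R with hX
  have hnX : ∀ x, (n : ℝ) • X x = ∑ k, (A (x k) - R * D * R) := by
    intro x
    have : X x = R * (((n : ℝ)⁻¹ • ∑ i : Fin n, Z (x i)) - D) * R := rfl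
    rw [this, hA, Finset.sum_sub_distrib, ← Finset.sum_mul, ← Finset.mul_sum, mul_sub, sub_mul,
      smul_sub, mul_smul_comm, smul_mul_assoc, smul_smul, mul_inv_cancel₀ hn'.ne', one_smul]
    simp [Nat.cast_smul_eq_nsmul]
  have hXsymm : ∀ x u v, ⟪X x u, v⟫ = ⟪u, X x v⟫ := by
    intro x u v
    have h1 : ∀ u v, ⟪((n : ℝ) • X x) u, v⟫ = ⟪u, ((n : ℝ) • X x) v⟫ := by
      intro u v
      simp only [hnX, sum_apply, sub_apply, inner_sum, sum_inner, inner_sub_left, inner_sub_right,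
        hAsymm, hRDRsymm]
    have h2 := h1 u v
    simp only [smul_apply, real_inner_smul_left, real_inner_smul_right] at h2
    exact mul_left_cancel₀ hn'.ne' h2
  set B : Finset ι → Set (Fin n → Ω) := fun s =>
    {x | ∃ u ∈ Submodule.span ℝ (b '' s), T * ‖u‖ ^ 2 < |⟪u, ((n : ℝ) • X x) u⟫|} with hB
  have hBmono : Monotone B := fun s s' hss x ⟨u, hu, h⟩ =>
    ⟨u, Submodule.span_mono (Set.image_mono (Finset.coe_subset.2 hss)) hu, h⟩
  have hBle : ∀ s, (Measure.pi fun _ : Fin n => μ) (B s) ≤ ENNReal.ofReal δ := by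
    intro s
    have hbound := RegConc.measure_quadratic_form_gt_le μ
      (Y := fun x => RegConc.compress b s (A x)) (C := RegConc.compress b s (R * D * R)) hF
      (fun i j => by
        simp only [RegConc.compress, Matrix.of_apply, hAin]
        refine Finset.measurable_sum _ fun k _ => ?_
        have h1 : ∀ v : H, Measurable fun x => ⟪ψ k x, v⟫ := fun v => by
          simp only [fun x => real_inner_comm v (ψ k x)]
          exact (innerSL ℝ v).continuous.measurable.comp (hmeas k)
        exact (h1 _).mul (h1 _))
      (fun x => RegConc.compress_posSemidef _ _ (hAsymm x) fun u => by
        rw [hAin]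
        exact Finset.sum_nonneg fun j _ => mul_self_nonneg _)
      (fun x => by
        rw [← RegConc.compress_one b s b.orthonormal, ← RegConc.compress_smul,
          ← RegConc.compress_sub]
        refine RegConc.compress_posSemidef _ _ (fun u v => ?_) fun u => ?_
        · simp [inner_sub_left, inner_sub_right, hAsymm, real_inner_smul_left,
            real_inner_smul_right]
        · have := hAF x u
          simp only [sub_apply, smul_apply, inner_sub_right, one_apply_eq_self, real_inner_smul_right,
            real_inner_self_eq_norm_sq]
          linarith)
      (fun i j => by
        have h1 : ∀ x, ⟪b i, A x (b j)⟫ = ⟪R (b i), Z x (R (b j))⟫ := fun x => by rw [hR]; rfl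
        simp only [RegConc.compress, Matrix.of_apply, h1, hDin]
        rw [hR]; rfl)
      (by
        rw [← RegConc.compress_one b s b.orthonormal, ← RegConc.compress_sub]
        refine RegConc.compress_posSemidef _ _ (fun u v => ?_)
          (RegConc.one_sub_conj_nonneg hRpos hlam.le hR₁' hR₂')
        simp only [sub_apply, inner_sub_left, inner_sub_right, hRDRsymm]
        rfl)
      (τ := trD / lam)
      (by
        rw [le_div_iff₀ hlam, mul_comm, Matrix.trace, Finset.mul_sum]
        refine (Finset.sum_le_sum (g := fun i : s => ⟪D (b i), b i⟫) fun i _ =>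
          RegConc.smul_conj_le hDpos hRpos hR₁' hR₂' (b i)).trans ?_
        rw [Finset.sum_coe_sort s fun i => ⟪D (b i), b i⟫]
        exact sum_le_hasSum s (fun i _ => hDpos.inner_nonneg_left _) htrD)
      hθ0 hθ3 n hT0
    refine (measure_mono ?_).trans (hbound.trans (ENNReal.ofReal_le_ofReal ?_))
    · rintro x ⟨u, hu, h⟩
      obtain ⟨c, rfl⟩ := (Submodule.mem_span_image_finset_iff_exists_fun ℝ).1 hu
      refine ⟨c, ?_⟩
      simp only [← RegConc.compress_sub]
      rw [← RegConc.compress_sum, ← hnX, RegConc.dotProduct_compress,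
        ← RegConc.inner_sum_smul_self b s b.orthonormal]
      exact h
    · rw [mul_div_assoc]
      calc _ ≤ 2 * (trD / lam) * (2 * Real.exp (-β)) := by gcongr
        _ = δ := by
          rw [Real.exp_neg, hexpβ]
          field_simp
          norm_num
  -- continuity from below along a directed countable family needs no measurability of `B s`
  have hUnion : (Measure.pi fun _ : Fin n => μ) (⋃ s, B s) ≤ ENNReal.ofReal δ := by
    rw [hBmono.directed_le.measure_iUnion]
    exact iSup_le hBle
  have hcover : Set.univ ⊆ {x | ‖X x‖ ≤ t} ∪ ⋃ s, B s := by
    intro x _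
    by_contra hx
    rw [Set.mem_union, not_or, Set.mem_iUnion, not_exists] at hx
    refine hx.1 (RegConc.norm_le_of_abs_inner_sum_le (hXsymm x) b ht0 fun s c => ?_)
    by_contra hc
    refine hx.2 s ⟨_, Submodule.sum_mem _ fun i hi => Submodule.smul_mem _ (c i)
      (Submodule.subset_span (Set.mem_image_of_mem b hi)), ?_⟩
    rw [smul_apply, real_inner_smul_right, abs_mul, abs_of_pos hn', hTt, mul_assoc]
    exact mul_lt_mul_of_pos_left (not_le.1 hc) hn'
  have h1 : 1 ≤ (Measure.pi fun _ : Fin n => μ) {x | ‖X x‖ ≤ t} + ENNReal.ofReal δ := by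
    calc (1 : ENNReal) = (Measure.pi fun _ : Fin n => μ) Set.univ := measure_univ.symm
      _ ≤ _ := measure_mono hcover
      _ ≤ _ := measure_union_le _ _
      _ ≤ _ := by gcongr
  rw [ENNReal.ofReal_sub _ hδ0.le, ENNReal.ofReal_one]
  exact tsub_le_iff_right.2 h1
end
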